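/- arXiv:1806.04369 — 3 statements merged into one kernel-verified Lean document; each statement's English description precedes it below -/
import Mathlib

section
/- Let p be an odd prime and let d, e, h, f be positive integers with h − d ≤ f < d < h < e. Then the order of the automorphism group of M₃(p,d,e,h,f) equals p^{2d+e+2f−h}. -/
/-- Relators for the group `M₁(p,d,e,f) = ⟨a, b ∣ a^(p^e) = b^(p^d) = 1, b⁻¹ab = a^(1+p^f)⟩`,
where `a` is generator `0` and `b` is generator `1`. -/
def M1rels (p d e f : ℕ) : Set (FreeGroup (Fin 2)) :=
  {FreeGroup.of 0 ^ p ^ e, FreeGroup.of 1 ^ p ^ d,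
    (FreeGroup.of 1)⁻¹ * FreeGroup.of 0 * FreeGroup.of 1 * (FreeGroup.of 0 ^ (1 + p ^ f))⁻¹}

/-- The metacyclic group `M₁(p,d,e,f) = ⟨a, b ∣ a^(p^e) = b^(p^d) = 1, b⁻¹ab = a^(1+p^f)⟩`. -/
abbrev M1 (p d e f : ℕ) : Type := PresentedGroup (M1rels p d e f)

/-- The canonical generator `a` of `M₁(p,d,e,f)`. -/
def M1a (p d e f : ℕ) : M1 p d e f := PresentedGroup.of 0

/-- The canonical generator `b` of `M₁(p,d,e,f)`. -/
def M1b (p d e f : ℕ) : M1 p d e f := PresentedGroup.of 1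

/-- Relators for the group `M₂(p,d,e,f) = ⟨a, b ∣ a^(p^d) = b^(p^e) = 1, b⁻¹ab = a^(1+p^f)⟩`,
where `a` is generator `0` and `b` is generator `1`. -/
def M2rels (p d e f : ℕ) : Set (FreeGroup (Fin 2)) :=
  {FreeGroup.of 0 ^ p ^ d, FreeGroup.of 1 ^ p ^ e,
    (FreeGroup.of 1)⁻¹ * FreeGroup.of 0 * FreeGroup.of 1 * (FreeGroup.of 0 ^ (1 + p ^ f))⁻¹}

/-- The metacyclic group `M₂(p,d,e,f) = ⟨a, b ∣ a^(p^d) = b^(p^e) = 1, b⁻¹ab = a^(1+p^f)⟩`. -/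
abbrev M2 (p d e f : ℕ) : Type := PresentedGroup (M2rels p d e f)

/-- The canonical generator `a` of `M₂(p,d,e,f)`. -/
def M2a (p d e f : ℕ) : M2 p d e f := PresentedGroup.of 0

/-- The canonical generator `b` of `M₂(p,d,e,f)`. -/
def M2b (p d e f : ℕ) : M2 p d e f := PresentedGroup.of 1

/-- Relators for the group
`M₃(p,d,e,h,f) = ⟨a, b ∣ a^(p^h) = 1, b^(p^(d+e-h)) = a^(p^d), b⁻¹ab = a^(1+p^f)⟩`,
where `a` is generator `0` and `b` is generator `1`. -/
def M3rels (p d e h f : ℕ) : Set (FreeGroup (Fin 2)) :=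
  {FreeGroup.of 0 ^ p ^ h, FreeGroup.of 1 ^ p ^ (d + e - h) * (FreeGroup.of 0 ^ p ^ d)⁻¹,
    (FreeGroup.of 1)⁻¹ * FreeGroup.of 0 * FreeGroup.of 1 * (FreeGroup.of 0 ^ (1 + p ^ f))⁻¹}

/-- The non-split metacyclic group
`M₃(p,d,e,h,f) = ⟨a, b ∣ a^(p^h) = 1, b^(p^(d+e-h)) = a^(p^d), b⁻¹ab = a^(1+p^f)⟩`. -/
abbrev M3 (p d e h f : ℕ) : Type := PresentedGroup (M3rels p d e h f)

/-- The canonical generator `a` of `M₃(p,d,e,h,f)`. -/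
def M3a (p d e h f : ℕ) : M3 p d e h f := PresentedGroup.of 0

/-- The canonical generator `b` of `M₃(p,d,e,h,f)`. -/
def M3b (p d e h f : ℕ) : M3 p d e h f := PresentedGroup.of 1

/-- `(α, β)` is an exact `(m,n)`-bicyclic pair of `G`: `α` has order `m`, `β` has order `n`,
`⟨α⟩ ∩ ⟨β⟩ = 1`, and `G = ⟨α⟩⟨β⟩`. -/
def IsExactBicyclicPair {G : Type*} [Group G] (m n : ℕ) (α β : G) : Prop :=
  orderOf α = m ∧ orderOf β = n ∧
    Subgroup.zpowers α ⊓ Subgroup.zpowers β = ⊥ ∧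
    ∀ g : G, ∃ i j : ℤ, g = α ^ i * β ^ j

/-!
An endomorphism of `G = M₃(p,d,e,h,f)` is a pair `(x, y)` of elements of `G` that satisfies the
defining relations, and since `G` is finite it is an automorphism exactly when `x` and `y` generate
`G`. Realising `G` as a cyclic extension of `⟨a⟩` shows that `a` has order `p ^ h`, so that every
element is uniquely `b ^ j * a ^ i` with `j < p ^ (d + e - h)` and `i < p ^ h`.

For `x = b ^ j * a ^ t` and `y = b ^ u * a ^ v` the relations force `j = p ^ (d + e - h - f) * s`,
and generation forces `p ∤ u`, hence `p ∤ t`, and then `u ≡ 1` modulo `p ^ (d - f)`. Once this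
holds, the relations become two linear congruences modulo `p ^ (h - d)` in `s` and `t` whose
determinant is prime to `p`. Thus `(u, v)` can be chosen in `p ^ (e + f - h) * p ^ h` ways, and each
choice leaves `p ^ (d + f - h) * p ^ d` possibilities for `(j, t)`.
-/

section GeometricSums

open Finset

theorem sum_range_mul_pow {R : Type*} [CommSemiring R] (q : R) (k m : ℕ) :
    ∑ i ∈ range (k * m), q ^ i = (∑ i ∈ range k, q ^ i) * ∑ i ∈ range m, (q ^ k) ^ i := by
  induction m with
  | zero => simp
  | succ m ih =>
    rw [Nat.mul_succ, sum_range_add, ih, sum_range_succ, mul_add]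
    simp only [pow_add, pow_mul, mul_comm ((q ^ k) ^ m), sum_mul]

theorem sum_range_pow_modEq {q c : ℕ} (hq : q ≡ 1 [MOD c]) (k : ℕ) :
    ∑ i ∈ range k, q ^ i ≡ k [MOD c] := by
  induction k with
  | zero => rfl
  | succ k ih =>
    rw [sum_range_succ]
    exact ih.add (by simpa only [one_pow] using hq.pow k)

theorem pow_modEq_one_of_dvd_sum_range_pow {q k c d : ℕ} (hq : q ≡ 1 [MOD c])
    (hk : d ∣ ∑ i ∈ range k, q ^ i) : q ^ k ≡ 1 [MOD d * c] := by
  rw [Nat.ModEq.comm, Nat.modEq_iff_dvd] at hq ⊢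
  push_cast at hq ⊢
  rw [← geom_sum_mul]
  exact mul_dvd_mul (by exact_mod_cast hk) hq

theorem sum_range_pow_pow_modEq {p q c : ℕ} (hq : q ≡ 1 [MOD p ^ (c + 1)]) (m : ℕ) :
    ∑ i ∈ range (p ^ m), q ^ i ≡ p ^ m [MOD p ^ (m + c)] := by
  induction m with
  | zero => simpa using Nat.ModEq.refl 1
  | succ m ih =>
    have hdvd : p ^ m ∣ ∑ i ∈ range (p ^ m), q ^ i :=
      (ih.dvd_iff (pow_dvd_pow p (Nat.le_add_right m c))).mpr dvd_rfl
    have hpow : q ^ p ^ m ≡ 1 [MOD p ^ (m + 1 + c)] := by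
      have := pow_modEq_one_of_dvd_sum_range_pow hq hdvd
      rwa [← pow_add, show m + (c + 1) = m + 1 + c by ring] at this
    have ih' := ih.mul_right' p
    rw [← pow_succ, ← pow_succ, show m + c + 1 = m + 1 + c by ring] at ih'
    rw [pow_succ p m, sum_range_mul_pow, ← pow_succ]
    exact ((sum_range_pow_modEq hpow p).mul_left _).trans ih'

theorem pow_dvd_sum_range_pow {p q c m k : ℕ} (hc : 0 < c) (hq : q ≡ 1 [MOD p ^ c])
    (hk : p ^ m ∣ k) : p ^ m ∣ ∑ i ∈ range k, q ^ i := by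
  obtain ⟨l, rfl⟩ := hk
  obtain ⟨c, rfl⟩ := Nat.exists_eq_add_one.mpr hc
  rw [sum_range_mul_pow]
  exact (((sum_range_pow_pow_modEq hq m).dvd_iff (pow_dvd_pow p (Nat.le_add_right m c))).mpr
    dvd_rfl).mul_right _

theorem pow_modEq_one_of_pow_dvd {p q c m k : ℕ} (hc : 0 < c) (hq : q ≡ 1 [MOD p ^ c])
    (hk : p ^ m ∣ k) : q ^ k ≡ 1 [MOD p ^ (m + c)] := by
  rw [pow_add]
  exact pow_modEq_one_of_dvd_sum_range_pow hq (pow_dvd_sum_range_pow hc hq hk)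

theorem sum_range_pow_modEq_of_pow_dvd {p q c m k e : ℕ} (hc : 0 < c) (hq : q ≡ 1 [MOD p ^ c])
    (hk : p ^ m ∣ k) (he : e < m + c) : ∑ i ∈ range k, q ^ i ≡ k [MOD p ^ e] := by
  obtain ⟨l, rfl⟩ := hk
  have hpow := (pow_modEq_one_of_pow_dvd hc hq (dvd_refl (p ^ m))).of_dvd (pow_dvd_pow p he.le)
  obtain ⟨c, rfl⟩ := Nat.exists_eq_add_one.mpr hc
  have hsum := (sum_range_pow_pow_modEq hq m).of_dvd (pow_dvd_pow p (Nat.le_of_lt_succ he))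
  rw [sum_range_mul_pow]
  exact hsum.mul (sum_range_pow_modEq hpow l)

theorem one_add_pow_pow_modEq {p f m k e : ℕ} (hf : 0 < f) (hk : p ^ m ∣ k)
    (he : e < m + f + f) : (1 + p ^ f) ^ k ≡ 1 + k * p ^ f [MOD p ^ e] := by
  have hq : 1 + p ^ f ≡ 1 [MOD p ^ f] := by simp [Nat.ModEq]
  obtain ⟨c, rfl⟩ := Nat.exists_eq_add_one.mpr hf
  have hsum := sum_range_pow_modEq_of_pow_dvd hf hq hk (Nat.lt_succ_self (m + c))
  have := (hsum.mul_right' (p ^ (c + 1))).add_left 1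
  rw [add_comm 1 (p ^ (c + 1)), add_comm 1 (_ * _), geom_sum_mul_add, ← pow_add,
    add_comm (p ^ (c + 1)) 1] at this
  exact this.of_dvd (pow_dvd_pow p (show e ≤ m + c + (c + 1) by omega))

end GeometricSums

theorem one_add_prime_pow_pow_modEq_iff {p f : ℕ} (hp : p.Prime) (hf : 0 < f)
    (hpf : p = 2 → 1 < f) (k i j : ℕ) :
    (1 + p ^ f) ^ i ≡ (1 + p ^ f) ^ j [MOD p ^ (f + k)] ↔ i ≡ j [MOD p ^ k] := by
  have : NeZero (p ^ (k + f)) := ⟨pow_ne_zero _ hp.ne_zero⟩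
  have hle : f + 2 ≤ p * f := by
    rcases eq_or_ne p 2 with rfl | hp2
    · have := hpf rfl; omega
    · have : 3 ≤ p := by have := hp.two_le; omega
      nlinarith
  have horder : orderOf (1 + (p : ZMod (p ^ (k + f))) ^ f) = p ^ k := by
    simpa using ZMod.orderOf_one_add_mul_prime_pow hp f hf.ne' hle 1
      (by exact_mod_cast hp.not_dvd_one) k
  have hfin : IsOfFinOrder (1 + (p : ZMod (p ^ (k + f))) ^ f) :=
    orderOf_pos_iff.mp (horder ▸ pow_pos hp.pos k)
  rw [add_comm f, ← ZMod.natCast_eq_natCast_iff, ← horder, ← hfin.pow_eq_pow_iff_modEq]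
  push_cast
  rfl

theorem dvd_iff_of_add_modEq_add {d n u v s t : ℕ} (hn : d ∣ n) (hv : d ∣ v) (hs : d ∣ s)
    (h : u + v ≡ s + t [MOD n]) : d ∣ u ↔ d ∣ t := by
  rw [Nat.dvd_add_iff_left hv, h.dvd_iff hn, ← Nat.dvd_add_iff_right hs]

theorem exists_forall_linear_system_modEq_iff {n A w D : ℕ} [NeZero n]
    (hcop : (A + w * D).Coprime n) (c : ℕ) :
    ∃ σ τ, ∀ s t, c ≡ s * D + t [MOD n] ∧ t * w ≡ s * A [MOD n] ↔
      s ≡ σ [MOD n] ∧ t ≡ τ [MOD n] := by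
  obtain ⟨κ, hκ⟩ := ((ZMod.isUnit_iff_coprime _ n).mpr hcop).exists_left_inv
  push_cast at hκ
  refine ⟨(κ * c * w).val, (c - κ * c * w * D : ZMod n).val, fun s t => ?_⟩
  simp only [← ZMod.natCast_eq_natCast_iff, ZMod.natCast_val, ZMod.cast_id', id_eq, Nat.cast_mul,
    Nat.cast_add]
  constructor
  · rintro ⟨hc, ht⟩
    have hs : (s : ZMod n) = κ * c * w := by linear_combination -s * hκ - κ * w * hc - κ * ht
    exact ⟨hs, by linear_combination -hc - D * hs⟩
  · rintro ⟨hs, ht⟩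
    exact ⟨by linear_combination -ht - D * hs, by linear_combination w * ht - A * hs - c * w * hκ⟩

section Counting

open scoped Count

theorem card_fin_modEq {N m : ℕ} (hm : 0 < m) (h : m ∣ N) (c : ℕ) :
    Nat.card {x : Fin N // (x : ℕ) ≡ c [MOD m]} = N / m := by
  have e : {x : Fin N // (x : ℕ) ≡ c [MOD m]} ≃ {x : ℕ // x < N ∧ x ≡ c [MOD m]} :=
    (Fin.equivSubtype.subtypeEquiv fun _ => Iff.rfl).trans
      (Equiv.subtypeSubtypeEquivSubtypeInter _ (· ≡ c [MOD m]))
  rw [Nat.card_congr e, Nat.card_eq_fintype_card, ← Nat.count_eq_card_fintype,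
    Nat.count_modEq_card N hm, Nat.mod_eq_zero_of_dvd h, if_neg (Nat.not_lt_zero _), add_zero]

theorem card_fin_prime_pow_modEq {p i j : ℕ} (hp : p.Prime) (hij : j ≤ i) (c : ℕ) :
    Nat.card {x : Fin (p ^ i) // (x : ℕ) ≡ c [MOD p ^ j]} = p ^ (i - j) := by
  rw [card_fin_modEq (pow_pos hp.pos j) (pow_dvd_pow p hij), Nat.pow_div hij hp.pos]

theorem card_subtype_and_prod {α β : Type*} [Finite α] [Finite β] {P : α → Prop}
    {Q : α → β → Prop} {c : ℕ} (h : ∀ a, P a → Nat.card {b // Q a b} = c) :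
    Nat.card {x : α × β // P x.1 ∧ Q x.1 x.2} = Nat.card {a // P a} * c := by
  have e : {x : α × β // P x.1 ∧ Q x.1 x.2} ≃ Σ a : {a // P a}, {b // Q a b} :=
    { toFun := fun x => ⟨⟨x.1.1, x.2.1⟩, ⟨x.1.2, x.2.2⟩⟩
      invFun := fun y => ⟨(y.1, y.2), y.1.2, y.2.2⟩ }
  have := Fintype.ofFinite {a // P a}
  rw [Nat.card_congr e, Nat.card_sigma, Finset.sum_congr rfl fun a _ => h a.1 a.2]
  simp

end Counting

section MetacyclicRelations

variable {G H : Type*} [Group G] [Group H]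

/-- The elements `a` and `b` satisfy the defining relations of the metacyclic group
`⟨a, b ∣ a ^ N = 1, b ^ M = a ^ m, b⁻¹ * a * b = a ^ r⟩`. -/
structure MetacyclicRelations (N M m r : ℕ) (a b : G) : Prop where
  left_pow : a ^ N = 1
  right_pow : b ^ M = a ^ m
  left_mul_right : a * b = b * a ^ r

namespace MetacyclicRelations

variable {N M m r : ℕ} {a b : G}

theorem map (h : MetacyclicRelations N M m r a b) (φ : G →* H) :
    MetacyclicRelations N M m r (φ a) (φ b) where
  left_pow := by rw [← map_pow, h.left_pow, map_one]
  right_pow := by rw [← map_pow, h.right_pow, map_pow]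
  left_mul_right := by rw [← map_mul, h.left_mul_right, map_mul, map_pow]

theorem left_pow_congr (h : MetacyclicRelations N M m r a b) {i i' : ℕ} (hi : i ≡ i' [MOD N]) :
    a ^ i = a ^ i' :=
  pow_eq_pow_iff_modEq.mpr (hi.of_dvd (orderOf_dvd_of_pow_eq_one h.left_pow))

theorem right_pow_mul (h : MetacyclicRelations N M m r a b) (s : ℕ) :
    b ^ (M * s) = a ^ (m * s) := by
  rw [pow_mul, h.right_pow, pow_mul]

theorem left_pow_mul_right_pow (h : MetacyclicRelations N M m r a b) (i j : ℕ) :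
    a ^ i * b ^ j = b ^ j * a ^ (i * r ^ j) := by
  induction j generalizing i with
  | zero => simp
  | succ j ih =>
    have hconj : SemiconjBy b (a ^ r) a := h.left_mul_right.symm
    rw [pow_succ, ← mul_assoc, ih, mul_assoc, ← (hconj.pow_right _).eq, ← mul_assoc, ← pow_mul]
    congr 2
    ring

theorem right_pow_mul_left_pow_mul (h : MetacyclicRelations N M m r a b) (j i j' i' : ℕ) :
    b ^ j * a ^ i * (b ^ j' * a ^ i') = b ^ (j + j') * a ^ (i * r ^ j' + i') := by
  rw [mul_assoc, ← mul_assoc (a ^ i), h.left_pow_mul_right_pow, pow_add, pow_add]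
  simp only [mul_assoc]

theorem right_pow_mul_left_pow_pow (h : MetacyclicRelations N M m r a b) (j i k : ℕ) :
    (b ^ j * a ^ i) ^ k = b ^ (j * k) * a ^ (i * ∑ l ∈ Finset.range k, (r ^ j) ^ l) := by
  induction k with
  | zero => simp
  | succ k ih =>
    rw [pow_succ', ih, h.right_pow_mul_left_pow_mul, Finset.sum_range_succ]
    congr 2 <;> ring

theorem right_pow_mul_left_pow_pow_modulus {p x y c : ℕ}
    (h : MetacyclicRelations (p ^ x) (p ^ y) m r a b) (hc : 0 < c) (hr : r ≡ 1 [MOD p ^ c])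
    (hx : x < y + c) (j i : ℕ) : (b ^ j * a ^ i) ^ p ^ y = a ^ (m * j + i * p ^ y) := by
  have hsum : ∑ l ∈ Finset.range (p ^ y), (r ^ j) ^ l ≡ p ^ y [MOD p ^ x] :=
    sum_range_pow_modEq_of_pow_dvd hc (by simpa using hr.pow j) dvd_rfl hx
  rw [h.right_pow_mul_left_pow_pow, h.left_pow_congr (hsum.mul_left i), mul_comm j,
    h.right_pow_mul, ← pow_add]

theorem isOfFinOrder_left (h : MetacyclicRelations N M m r a b) (hN : 0 < N) : IsOfFinOrder a :=
  isOfFinOrder_iff_pow_eq_one.mpr ⟨N, hN, h.left_pow⟩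

theorem isOfFinOrder_right (h : MetacyclicRelations N M m r a b) (hN : 0 < N) (hM : 0 < M) :
    IsOfFinOrder b :=
  IsOfFinOrder.of_pow (h.right_pow ▸ (h.isOfFinOrder_left hN).pow) hM.ne'

theorem exists_eq_right_pow_mul_left_pow (h : MetacyclicRelations N M m r a b) (hN : 0 < N)
    (hM : 0 < M) (htop : Subgroup.closure {a, b} = ⊤) (g : G) :
    ∃ j < M, ∃ i < N, g = b ^ j * a ^ i := by
  suffices ∃ j i, g = b ^ j * a ^ i by
    obtain ⟨j, i, rfl⟩ := this
    refine ⟨j % M, Nat.mod_lt _ hM, (m * (j / M) + i) % N, Nat.mod_lt _ hN, ?_⟩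
    rw [h.left_pow_congr (Nat.mod_modEq _ N), pow_add, ← h.right_pow_mul, ← mul_assoc, ← pow_add,
      Nat.mod_add_div]
  have hfin : ∀ x ∈ ({a, b} : Set G), IsOfFinOrder x := by
    rintro x (rfl | rfl)
    exacts [h.isOfFinOrder_left hN, h.isOfFinOrder_right hN hM]
  have hg : g ∈ Submonoid.closure {a, b} := by
    rw [← Subgroup.closure_toSubmonoid_of_isOfFinOrder hfin, htop]
    trivial
  induction hg using Submonoid.closure_induction with
  | mem x hx =>
    rcases hx with rfl | rfl
    exacts [⟨0, 1, by simp⟩, ⟨1, 0, by simp⟩]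
  | one => exact ⟨0, 0, by simp⟩
  | mul x y _ _ hx hy =>
    obtain ⟨j, i, rfl⟩ := hx
    obtain ⟨j', i', rfl⟩ := hy
    exact ⟨_, _, h.right_pow_mul_left_pow_mul j i j' i'⟩

end MetacyclicRelations

end MetacyclicRelations

section CyclicExtension

open SemidirectProduct Multiplicative

universe u

variable {A : Type u} [Group A] {θ : MulAut A} {z : A} {M : ℕ}

theorem commute_inl_inv_mul_inr_ofAdd (hz : θ z = z) (hθ : θ ^ M = MulAut.conj z)
    (g : A ⋊[zpowersHom (MulAut A) θ] Multiplicative ℤ) :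
    Commute g (inl z⁻¹ * inr (ofAdd (M : ℤ))) := by
  have hfix (k : ℤ) : (θ ^ k) z = z :=
    (MulAction.stabilizer (MulAut A) z).zpow_mem (show θ ∈ MulAction.stabilizer _ z from hz) k
  refine SemidirectProduct.ext ?_ ?_
  · simp [hfix, hθ, mul_assoc]
  · simp [mul_comm]

-- The extension is the quotient of `A ⋊ ℤ`, in which the generator of `ℤ` acts through `θ`, by
-- the central element that identifies the `M`-th power of this generator with `z`.
theorem exists_cyclic_extension (hM : M ≠ 0) (hz : θ z = z) (hθ : θ ^ M = MulAut.conj z) :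
    ∃ (E : Type u) (_ : Group E) (ι : A →* E) (β : E), Function.Injective ι ∧ β ^ M = ι z ∧
      ∀ x, β * ι x * β⁻¹ = ι (θ x) := by
  let c : A ⋊[zpowersHom (MulAut A) θ] Multiplicative ℤ := inl z⁻¹ * inr (ofAdd (M : ℤ))
  have : (Subgroup.zpowers c).Normal := by
    refine ⟨fun n hn g => ?_⟩
    obtain ⟨k, rfl⟩ := hn
    rw [((commute_inl_inv_mul_inr_ofAdd hz hθ g).zpow_right k).eq, mul_inv_cancel_right]
    exact ⟨k, rfl⟩
  refine ⟨_ ⧸ Subgroup.zpowers c, inferInstance, (QuotientGroup.mk' _).comp inl,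
    QuotientGroup.mk' _ (inr (ofAdd (1 : ℤ))), ?_, ?_, fun x => ?_⟩
  · refine (injective_iff_map_eq_one _).mpr fun x hx => ?_
    obtain ⟨k, hk⟩ := (QuotientGroup.eq_one_iff _).mp hx
    have hk0 : k = 0 := by
      have hright := congrArg rightHom hk
      simp only [map_zpow, c, map_mul, rightHom_inl, rightHom_inr, one_mul, ← ofAdd_zsmul] at hright
      simpa [hM] using hright
    rw [hk0] at hk
    exact inl_injective (by simpa using hk.symm)
  · rw [← map_pow, MonoidHom.comp_apply, QuotientGroup.mk'_eq_mk']
    refine ⟨c⁻¹, Subgroup.inv_mem _ (Subgroup.mem_zpowers c), ?_⟩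
    rw [← map_pow, ← ofAdd_nsmul, mul_inv_rev, map_inv inl, inv_inv, ← map_inv]
    simp
  · simp only [MonoidHom.comp_apply, ← map_mul, ← map_inv, ← inl_aut]
    simp

end CyclicExtension

section MetacyclicGroup

/-- The relators of the metacyclic group `⟨a, b ∣ a ^ N = 1, b ^ M = a ^ m, b⁻¹ * a * b = a ^ r⟩`,
where `a` is generator `0` and `b` is generator `1`. -/
def metacyclicRels (N M m r : ℕ) : Set (FreeGroup (Fin 2)) :=
  {FreeGroup.of 0 ^ N, FreeGroup.of 1 ^ M * (FreeGroup.of 0 ^ m)⁻¹,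
    (FreeGroup.of 1)⁻¹ * FreeGroup.of 0 * FreeGroup.of 1 * (FreeGroup.of 0 ^ r)⁻¹}

/-- The metacyclic group `⟨a, b ∣ a ^ N = 1, b ^ M = a ^ m, b⁻¹ * a * b = a ^ r⟩`. -/
abbrev MetacyclicGroup (N M m r : ℕ) : Type := PresentedGroup (metacyclicRels N M m r)

/-- Generators `a` and `b` of a metacyclic group subject to its defining relations, such that `a`
has the full order `N` and `b` has order `M` modulo `⟨a⟩`. The latter is expressed by the quotient
map by `⟨a⟩`, read as a homomorphism to `ZMod M`. -/
structure IsMetacyclicBasis {G : Type*} [Group G] (N M m r : ℕ) (a b : G) : Prop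
    extends MetacyclicRelations N M m r a b where
  closure_eq_top : Subgroup.closure {a, b} = ⊤
  orderOf_left : orderOf a = N
  exists_character : ∃ χ : G →* Multiplicative (ZMod M), χ a = 1 ∧ χ b = Multiplicative.ofAdd 1

namespace MetacyclicGroup

variable {N M m r : ℕ}

theorem forall_metacyclicRels_iff {G : Type*} [Group G] {g : Fin 2 → G} :
    (∀ w ∈ metacyclicRels N M m r, FreeGroup.lift g w = 1) ↔
      MetacyclicRelations N M m r (g 0) (g 1) := by
  simp only [metacyclicRels, Set.mem_insert_iff, Set.mem_singleton_iff, forall_eq_or_imp,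
    forall_eq, map_mul, map_inv, map_pow, FreeGroup.lift_apply_of, mul_inv_eq_one,
    mul_assoc _ (g 0), inv_mul_eq_iff_eq_mul]
  exact ⟨fun ⟨h₁, h₂, h₃⟩ => ⟨h₁, h₂, h₃⟩, fun ⟨h₁, h₂, h₃⟩ => ⟨h₁, h₂, h₃⟩⟩

theorem metacyclicRelations_of : MetacyclicRelations N M m r
    (PresentedGroup.of 0 : MetacyclicGroup N M m r) (PresentedGroup.of 1) := by
  refine forall_metacyclicRels_iff.mp fun w hw => ?_
  rw [← PresentedGroup.one_of_mem hw]
  exact DFunLike.congr_fun (FreeGroup.ext_hom (FreeGroup.lift PresentedGroup.of)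
    (PresentedGroup.mk _) fun i => FreeGroup.lift_apply_of) w

theorem closure_of_eq_top :
    Subgroup.closure {(PresentedGroup.of 0 : MetacyclicGroup N M m r), PresentedGroup.of 1} =
      ⊤ := by
  rw [← PresentedGroup.closure_range_of]
  congr 1
  ext g
  simp [Fin.exists_fin_two, eq_comm]

theorem exists_hom {G : Type*} [Group G] {a b : G} (h : MetacyclicRelations N M m r a b) :
    ∃ φ : MetacyclicGroup N M m r →* G,
      φ (PresentedGroup.of 0) = a ∧ φ (PresentedGroup.of 1) = b :=
  ⟨PresentedGroup.toGroup (f := ![a, b]) (forall_metacyclicRels_iff.mpr h),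
    PresentedGroup.toGroup.of _, PresentedGroup.toGroup.of _⟩

theorem finite (hN : 0 < N) (hM : 0 < M) : Finite (MetacyclicGroup N M m r) := by
  let a : MetacyclicGroup N M m r := PresentedGroup.of 0
  let b : MetacyclicGroup N M m r := PresentedGroup.of 1
  refine Finite.of_surjective (fun x : Fin M × Fin N => b ^ (x.1 : ℕ) * a ^ (x.2 : ℕ)) fun g => ?_
  obtain ⟨j, hj, i, hi, rfl⟩ :=
    metacyclicRelations_of.exists_eq_right_pow_mul_left_pow hN hM closure_of_eq_top g
  exact ⟨(⟨j, hj⟩, ⟨i, hi⟩), rfl⟩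

theorem closure_map_of_eq_top {G : Type*} [Group G] {φ : MetacyclicGroup N M m r →* G} :
    Subgroup.closure {φ (PresentedGroup.of 0), φ (PresentedGroup.of 1)} = ⊤ ↔
      Function.Surjective φ := by
  rw [← Set.image_pair, ← MonoidHom.map_closure, closure_of_eq_top, ← MonoidHom.range_eq_map,
    MonoidHom.range_eq_top]

theorem card_mulAut (hN : 0 < N) (hM : 0 < M) :
    Nat.card (MulAut (MetacyclicGroup N M m r)) =
      Nat.card {x : MetacyclicGroup N M m r × MetacyclicGroup N M m r //
        MetacyclicRelations N M m r x.1 x.2 ∧ Subgroup.closure {x.1, x.2} = ⊤} := by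
  have := finite (m := m) (r := r) hN hM
  refine Nat.card_congr (Equiv.ofBijective (fun φ : MulAut (MetacyclicGroup N M m r) =>
    ⟨(φ (PresentedGroup.of 0), φ (PresentedGroup.of 1)),
      metacyclicRelations_of.map φ.toMonoidHom, ?_⟩) ⟨fun φ ψ h => ?_, ?_⟩)
  · exact closure_map_of_eq_top (φ := φ.toMonoidHom).mpr φ.surjective
  · have hφψ : φ.toMonoidHom = ψ.toMonoidHom := MonoidHom.eq_of_eqOn_dense closure_of_eq_top <| by
      rintro g (rfl | rfl)
      exacts [congrArg (fun x => x.1.1) h, congrArg (fun x => x.1.2) h]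
    exact MulEquiv.ext fun g => DFunLike.congr_fun hφψ g
  · rintro ⟨⟨x, y⟩, h, htop⟩
    obtain ⟨φ, rfl, rfl⟩ := exists_hom h
    have hsurj : Function.Surjective φ := closure_map_of_eq_top.mp htop
    exact ⟨MulEquiv.ofBijective φ ⟨Finite.injective_iff_surjective.mpr hsurj, hsurj⟩, rfl⟩

theorem exists_metacyclicRelations_orderOf_eq (hM : M ≠ 0) (hr : r ^ M ≡ 1 [MOD N])
    (hm : m * r ≡ m [MOD N]) :
    ∃ (E : Type) (_ : Group E) (a b : E), MetacyclicRelations N M m r a b ∧ orderOf a = N := by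
  let Θ : (ZMod N)ˣ →* MulAut (Multiplicative (ZMod N)) :=
    (MulAutMultiplicative (ZMod N)).symm.toMonoidHom.comp (DistribMulAction.toAddAut _ _)
  have hΘ (u : (ZMod N)ˣ) (x : ZMod N) :
      Θ u (Multiplicative.ofAdd x) = Multiplicative.ofAdd (u * x) := rfl
  let z := Multiplicative.ofAdd (m : ZMod N)
  let u : (ZMod N)ˣ := Units.ofPowEqOne (r : ZMod N) M
    (by exact_mod_cast (ZMod.natCast_eq_natCast_iff _ _ N).mpr hr) hM
  have hz : Θ u⁻¹ z = z := by
    have hm' : (m : ZMod N) * u = m := by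
      simpa [u] using (ZMod.natCast_eq_natCast_iff _ _ N).mpr hm
    rw [hΘ, mul_comm, (Units.mul_inv_eq_iff_eq_mul u).mpr hm'.symm]
  have hΘM : Θ u⁻¹ ^ M = MulAut.conj z := by
    rw [← map_pow, inv_pow, Units.pow_ofPowEqOne, inv_one, map_one]
    ext x
    simp
  obtain ⟨E, _, ι, b, hι, hb, hconj⟩ := exists_cyclic_extension hM hz hΘM
  refine ⟨E, inferInstance, ι (Multiplicative.ofAdd 1), b, ⟨?_, ?_, ?_⟩, ?_⟩
  · rw [← map_pow, ← ofAdd_nsmul]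
    simp
  · rw [hb, ← map_pow, ← ofAdd_nsmul]
    simp [z]
  · rw [← eq_mul_inv_iff_mul_eq, ← map_pow, hconj, ← ofAdd_nsmul, hΘ, nsmul_one]
    exact congrArg (fun x => ι (Multiplicative.ofAdd x)) u.inv_mul.symm
  · rw [orderOf_injective ι hι, orderOf_ofAdd_eq_addOrderOf, ZMod.addOrderOf_one]

theorem orderOf_of_zero (hM : M ≠ 0) (hr : r ^ M ≡ 1 [MOD N]) (hm : m * r ≡ m [MOD N]) :
    orderOf (PresentedGroup.of 0 : MetacyclicGroup N M m r) = N := by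
  obtain ⟨E, _, a, b, hab, ha⟩ := exists_metacyclicRelations_orderOf_eq hM hr hm
  obtain ⟨φ, rfl, -⟩ := exists_hom hab
  exact Nat.dvd_antisymm (orderOf_dvd_of_pow_eq_one metacyclicRelations_of.left_pow)
    (ha.symm.dvd.trans (orderOf_map_dvd φ _))

theorem isMetacyclicBasis (hM : M ≠ 0) (hr : r ^ M ≡ 1 [MOD N]) (hm : m * r ≡ m [MOD N]) :
    IsMetacyclicBasis N M m r (PresentedGroup.of 0 : MetacyclicGroup N M m r)
      (PresentedGroup.of 1) where
  toMetacyclicRelations := metacyclicRelations_of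
  closure_eq_top := closure_of_eq_top
  orderOf_left := orderOf_of_zero hM hr hm
  exists_character := exists_hom ⟨one_pow N, by simp [← ofAdd_nsmul], by simp⟩

end MetacyclicGroup

end MetacyclicGroup

namespace IsMetacyclicBasis

variable {G : Type*} [Group G] {N M m r : ℕ} {a b : G}

theorem left_pow_eq_left_pow_iff (h : IsMetacyclicBasis N M m r a b) {i i' : ℕ} :
    a ^ i = a ^ i' ↔ i ≡ i' [MOD N] := by
  rw [pow_eq_pow_iff_modEq, h.orderOf_left]

theorem right_exponent_modEq (h : IsMetacyclicBasis N M m r a b) {j i j' i' : ℕ}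
    (heq : b ^ j * a ^ i = b ^ j' * a ^ i') : j ≡ j' [MOD M] := by
  obtain ⟨χ, hχa, hχb⟩ := h.exists_character
  have := congrArg (fun g => (χ g).toAdd) heq
  simpa [hχa, hχb, ← ofAdd_nsmul, ZMod.natCast_eq_natCast_iff] using this

theorem bijective_right_pow_mul_left_pow (h : IsMetacyclicBasis N M m r a b) (hN : 0 < N)
    (hM : 0 < M) :
    Function.Bijective fun x : Fin M × Fin N => b ^ (x.1 : ℕ) * a ^ (x.2 : ℕ) := by
  refine ⟨fun x y hxy => ?_, fun g => ?_⟩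
  · have hright : x.1 = y.1 := Fin.ext <|
      (h.right_exponent_modEq hxy).eq_of_lt_of_lt x.1.is_lt y.1.is_lt
    have hleft : a ^ (x.2 : ℕ) = a ^ (y.2 : ℕ) := by simpa [hright] using hxy
    exact Prod.ext hright <| Fin.ext <|
      (h.left_pow_eq_left_pow_iff.mp hleft).eq_of_lt_of_lt x.2.is_lt y.2.is_lt
  · obtain ⟨j, hj, i, hi, rfl⟩ :=
      h.exists_eq_right_pow_mul_left_pow hN hM h.closure_eq_top g
    exact ⟨(⟨j, hj⟩, ⟨i, hi⟩), rfl⟩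

theorem dvd_mul_of_left_mul_right {c : ℕ} (h : IsMetacyclicBasis N M m (1 + c) a b) {j t u v : ℕ}
    (hcomm : b ^ j * a ^ t * (b ^ u * a ^ v) = b ^ u * a ^ v * (b ^ j * a ^ t) ^ (1 + c)) :
    M ∣ j * c := by
  rw [h.right_pow_mul_left_pow_pow, h.right_pow_mul_left_pow_mul,
    h.right_pow_mul_left_pow_mul] at hcomm
  have hmod := h.right_exponent_modEq hcomm
  rw [show u + j * (1 + c) = j + u + j * c by ring] at hmod
  simpa only [Nat.add_sub_cancel_left] using (Nat.modEq_iff_dvd' (Nat.le_add_right _ _)).mp hmod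

theorem not_dvd_of_closure_eq_top (h : IsMetacyclicBasis N M m r a b) {p j t u v : ℕ}
    (hp : p ≠ 1) (hM : p ∣ M) (hj : p ∣ j)
    (htop : Subgroup.closure {b ^ j * a ^ t, b ^ u * a ^ v} = ⊤) : ¬ p ∣ u := by
  intro hu
  obtain ⟨χ, hχa, hχb⟩ := h.exists_character
  let ψ : G →* Multiplicative (ZMod p) :=
    (ZMod.castHom hM (ZMod p)).toAddMonoidHom.toMultiplicative.comp χ
  have hψ {n : ℕ} (hn : p ∣ n) (i : ℕ) : ψ (b ^ n * a ^ i) = 1 := by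
    have := (ZMod.natCast_eq_zero_iff n p).mpr hn
    simp [ψ, hχa, hχb, ← ofAdd_nsmul, this]
  have hker : ψ = 1 := MonoidHom.eq_of_eqOn_dense htop <| by
    rintro _ (rfl | rfl)
    exacts [hψ hj t, hψ hu v]
  have hb : ψ b = Multiplicative.ofAdd 1 := by simp [ψ, hχb, ZMod.cast_one hM]
  rw [hker, MonoidHom.one_apply, eq_comm, ofAdd_eq_one, ZMod.one_eq_zero_iff] at hb
  exact hp hb

theorem closure_eq_top_of_not_dvd {p x y : ℕ} (h : IsMetacyclicBasis (p ^ x) (p ^ y) m r a b)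
    (hp : p.Prime) (hr : r ≡ 1 [MOD p]) {j t u v : ℕ} (hj : p ∣ j) (ht : ¬ p ∣ t)
    (hu : ¬ p ∣ u) : Subgroup.closure {b ^ j * a ^ t, b ^ u * a ^ v} = ⊤ := by
  set K := Subgroup.closure {b ^ j * a ^ t, b ^ u * a ^ v}
  have hx : b ^ j * a ^ t ∈ K := Subgroup.subset_closure (by simp)
  have hy : b ^ u * a ^ v ∈ K := Subgroup.subset_closure (by simp)
  obtain ⟨w, hw⟩ : ∃ w, (b ^ u) ^ w = b := by
    refine exists_pow_eq_self_of_coprime <| ((hp.coprime_iff_not_dvd.mpr hu).pow_left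
      (y + x)).symm.of_dvd_right <| orderOf_dvd_of_pow_eq_one ?_
    rw [pow_add, h.right_pow_mul, mul_comm, pow_mul, h.left_pow, one_pow]
  have ha : a ∈ K := by
    let S := ∑ l ∈ Finset.range (w * j), (r ^ u) ^ l
    have hS : p ∣ S :=
      ((sum_range_pow_modEq (by simpa using hr.pow u) (w * j)).dvd_iff dvd_rfl).mpr
        (hj.mul_left w)
    let c := t + (p ^ x - 1) * (v * S)
    have hc : p.Coprime c := hp.coprime_iff_not_dvd.mpr fun hdvd =>
      ht ((Nat.dvd_add_left ((hS.mul_left v).mul_left _)).mp hdvd)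
    have hmul : (b ^ u * a ^ v) ^ (w * j) * a ^ c = b ^ j * a ^ t := by
      rw [h.right_pow_mul_left_pow_pow, pow_mul, pow_mul, hw, mul_assoc, ← pow_add]
      congr 1
      have hexp : v * S + c = t + p ^ x * (v * S) := by
        rw [← Nat.add_sub_cancel' (Nat.one_le_pow x p hp.pos)]
        ring
      have hmod : v * S + c ≡ t [MOD p ^ x] := by simp [hexp, Nat.ModEq]
      exact h.left_pow_congr hmod
    have hac : a ^ c ∈ K := (K.mul_mem_cancel_left (K.pow_mem hy _)).mp (hmul ▸ hx)
    obtain ⟨l, hl⟩ := exists_pow_eq_self_of_coprime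
      ((hc.pow_left x).symm.of_dvd_right h.orderOf_left.dvd)
    exact hl ▸ K.pow_mem hac l
  have hb : b ∈ K := by
    have hbu : b ^ u ∈ K := (K.mul_mem_cancel_right (K.pow_mem ha v)).mp hy
    exact hw ▸ K.pow_mem hbu w
  rw [eq_top_iff, ← h.closure_eq_top, Subgroup.closure_le]
  rintro _ (rfl | rfl)
  exacts [ha, hb]

end IsMetacyclicBasis

section PrimePower

-- With `d = f + g` and `h = f + g + q`, the number `f + g + k` is the exponent `d + e - h` of the
-- relation `b ^ p ^ (d + e - h) = a ^ p ^ d`, so that no subtraction occurs.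
variable {G : Type*} [Group G] {p f g k q : ℕ} {a b : G}

theorem exists_one_add_pow_pow_eq (hp : p ≠ 1) (hf : 0 < f) (hg : 0 < g) {u : ℕ}
    (hu : u ≡ 1 [MOD p ^ g]) : ∃ w, (1 + p ^ f) ^ u = 1 + p ^ f + p ^ (f + g) * w := by
  have hu0 : u ≠ 0 := by
    rintro rfl
    exact hp (Nat.dvd_one.mp ((hu.dvd_iff (dvd_pow_self p hg.ne')).mp (dvd_zero p)))
  obtain ⟨i, rfl⟩ := Nat.exists_eq_add_one_of_ne_zero hu0
  have hi : p ^ g ∣ i := Nat.modEq_zero_iff_dvd.mp (hu.add_right_cancel' (b := 0) 1)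
  have hq : 1 + p ^ f ≡ 1 [MOD p ^ f] := by simp [Nat.ModEq]
  have hmod := (pow_modEq_one_of_pow_dvd hf hq hi).mul_right (1 + p ^ f)
  rw [← pow_succ, one_mul, add_comm g] at hmod
  obtain ⟨w, hw⟩ := (Nat.modEq_iff_dvd' (Nat.le_self_pow hu0 _)).mp hmod.symm
  exact ⟨w, by rw [← hw, Nat.add_sub_cancel' (Nat.le_self_pow hu0 _)]⟩

theorem exists_forall_exponent_system_modEq_iff (hp : p.Prime) (hf : 0 < f) (hg : 0 < g)
    (hk : 0 < k) {u : ℕ} (hu : u ≡ 1 [MOD p ^ g]) (v : ℕ) :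
    ∃ σ τ, ∀ s t, u + v * p ^ k ≡ s * p ^ g + t [MOD p ^ q] ∧
        t * (1 + p ^ f) ^ u ≡ t * (1 + p ^ f) + p ^ (f + g) * (s * (1 + v * p ^ k))
          [MOD p ^ (f + g + q)] ↔
      s ≡ σ [MOD p ^ q] ∧ t ≡ τ [MOD p ^ q] := by
  have : NeZero (p ^ q) := ⟨pow_ne_zero q hp.ne_zero⟩
  obtain ⟨w, hw⟩ := exists_one_add_pow_pow_eq hp.ne_one hf hg hu
  have hcop : (1 + v * p ^ k + w * p ^ g).Coprime (p ^ q) := by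
    refine ((hp.coprime_iff_not_dvd.mpr fun hdvd => hp.one_lt.ne' ?_).pow_left q).symm
    have hdvd' := (Nat.dvd_add_left ((dvd_pow_self p hg.ne').mul_left w)).mp hdvd
    exact Nat.dvd_one.mp ((Nat.dvd_add_left ((dvd_pow_self p hk.ne').mul_left v)).mp hdvd')
  obtain ⟨σ, τ, hστ⟩ := exists_forall_linear_system_modEq_iff hcop (u + v * p ^ k)
  refine ⟨σ, τ, fun s t => (and_congr_right fun _ => ?_).trans (hστ s t)⟩
  rw [hw, mul_add t, mul_left_comm t (p ^ (f + g)), pow_add p (f + g) q,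
    Nat.ModEq.add_iff_left rfl, Nat.ModEq.mul_left_cancel_iff' (pow_pos hp.pos _).ne']

namespace MetacyclicRelations

theorem right_pow_mul_left_pow_pow_of_dvd
    (h : MetacyclicRelations (p ^ (f + g + q)) (p ^ (f + g + k)) (p ^ (f + g)) (1 + p ^ f) a b)
    (hf : 0 < f) (hk : 0 < k) (hqf : q ≤ f) (s t i : ℕ) :
    (b ^ (p ^ (g + k) * s) * a ^ t) ^ p ^ (f + i) =
      a ^ (s * p ^ (f + g + i) + t * p ^ (f + i)) := by
  have hpow : (1 + p ^ f) ^ (p ^ (g + k) * s) ≡ 1 [MOD p ^ (g + k + f)] :=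
    pow_modEq_one_of_pow_dvd hf (by simp [Nat.ModEq]) (dvd_mul_right _ s)
  have hsum : ∑ l ∈ Finset.range (p ^ (f + i)), ((1 + p ^ f) ^ (p ^ (g + k) * s)) ^ l ≡ p ^ (f + i)
      [MOD p ^ (f + g + q)] :=
    sum_range_pow_modEq_of_pow_dvd (by omega) hpow dvd_rfl (by omega)
  rw [h.right_pow_mul_left_pow_pow, h.left_pow_congr (hsum.mul_left t),
    show p ^ (g + k) * s * p ^ (f + i) = p ^ (f + g + k) * (s * p ^ i) by ring, h.right_pow_mul,
    ← pow_add]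
  congr 1
  ring

end MetacyclicRelations

namespace IsMetacyclicBasis

theorem left_mul_right_iff
    (h : IsMetacyclicBasis (p ^ (f + g + q)) (p ^ (f + g + k)) (p ^ (f + g)) (1 + p ^ f) a b)
    (hf : 0 < f) (hk : 0 < k) (hqf : q ≤ f) (s t u v : ℕ) :
    b ^ (p ^ (g + k) * s) * a ^ t * (b ^ u * a ^ v) =
        b ^ u * a ^ v * (b ^ (p ^ (g + k) * s) * a ^ t) ^ (1 + p ^ f) ↔
      t * (1 + p ^ f) ^ u ≡ t * (1 + p ^ f) + p ^ (f + g) * (s * (1 + v * p ^ k))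
        [MOD p ^ (f + g + q)] := by
  have hpow : (1 + p ^ f) ^ (p ^ (g + k) * s) ≡ 1 + p ^ (g + k) * s * p ^ f
      [MOD p ^ (f + g + q)] :=
    one_add_pow_pow_modEq hf (dvd_mul_right _ s) (by omega)
  have hx := h.right_pow_mul_left_pow_pow_of_dvd hf hk hqf s t 0
  rw [add_zero, add_zero] at hx
  rw [pow_add _ 1, pow_one, ← mul_assoc (b ^ u * a ^ v), hx, h.right_pow_mul_left_pow_mul,
    h.right_pow_mul_left_pow_mul, mul_assoc, ← pow_add, add_comm u, mul_right_inj,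
    h.left_pow_eq_left_pow_iff]
  have hexp : v * (1 + p ^ f) ^ (p ^ (g + k) * s) + t + (s * p ^ (f + g) + t * p ^ f) ≡
      t * (1 + p ^ f) + p ^ (f + g) * (s * (1 + v * p ^ k)) + v [MOD p ^ (f + g + q)] := by
    convert ((hpow.mul_left v).add_right t).add_right (s * p ^ (f + g) + t * p ^ f) using 1
    ring
  exact ⟨fun H => (H.trans hexp).add_right_cancel' v, fun H => (H.add_right v).trans hexp.symm⟩

theorem metacyclicRelations_iff
    (h : IsMetacyclicBasis (p ^ (f + g + q)) (p ^ (f + g + k)) (p ^ (f + g)) (1 + p ^ f) a b)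
    (hp : 0 < p) (hf : 0 < f) (hk : 0 < k) (hqf : q ≤ f) (j t u v : ℕ) :
    MetacyclicRelations (p ^ (f + g + q)) (p ^ (f + g + k)) (p ^ (f + g)) (1 + p ^ f)
        (b ^ j * a ^ t) (b ^ u * a ^ v) ↔
      ∃ s, j = p ^ (g + k) * s ∧ u + v * p ^ k ≡ s * p ^ g + t [MOD p ^ q] ∧
        t * (1 + p ^ f) ^ u ≡ t * (1 + p ^ f) + p ^ (f + g) * (s * (1 + v * p ^ k))
          [MOD p ^ (f + g + q)] := by
  have right_pow_iff (s : ℕ) :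
      (b ^ u * a ^ v) ^ p ^ (f + g + k) = (b ^ (p ^ (g + k) * s) * a ^ t) ^ p ^ (f + g) ↔
        u + v * p ^ k ≡ s * p ^ g + t [MOD p ^ q] := by
    rw [h.right_pow_mul_left_pow_pow_modulus hf (by simp [Nat.ModEq]) (by omega),
      h.right_pow_mul_left_pow_pow_of_dvd hf hk hqf, h.left_pow_eq_left_pow_iff,
      show p ^ (f + g) * u + v * p ^ (f + g + k) = p ^ (f + g) * (u + v * p ^ k) by ring,
      show s * p ^ (f + g + g) + t * p ^ (f + g) = p ^ (f + g) * (s * p ^ g + t) by ring,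
      pow_add p (f + g) q, Nat.ModEq.mul_left_cancel_iff' (pow_pos hp _).ne']
  constructor
  · rintro ⟨-, hright, hcomm⟩
    obtain ⟨s, rfl⟩ : p ^ (g + k) ∣ j := Nat.dvd_of_mul_dvd_mul_right (pow_pos hp f) <| by
      rw [← pow_add, show g + k + f = f + g + k by ring]
      exact h.dvd_mul_of_left_mul_right hcomm
    exact ⟨s, rfl, (right_pow_iff s).mp hright, (h.left_mul_right_iff hf hk hqf ..).mp hcomm⟩
  · rintro ⟨s, rfl, hright, hcomm⟩
    refine ⟨?_, (right_pow_iff s).mpr hright, (h.left_mul_right_iff hf hk hqf ..).mpr hcomm⟩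
    rw [add_assoc f, h.right_pow_mul_left_pow_pow_of_dvd hf hk hqf, ← pow_zero a,
      h.left_pow_eq_left_pow_iff, Nat.modEq_zero_iff_dvd]
    exact dvd_add (dvd_mul_of_dvd_right (pow_dvd_pow p (by omega)) s)
      (dvd_mul_of_dvd_right (pow_dvd_pow p (by omega)) t)

theorem modEq_one_of_closure_eq_top
    (h : IsMetacyclicBasis (p ^ (f + g + q)) (p ^ (f + g + k)) (p ^ (f + g)) (1 + p ^ f) a b)
    (hp : p.Prime) (hpf : p = 2 → 1 < f) (hf : 0 < f) (hg : 0 < g) (hk : 0 < k) (hq : 0 < q)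
    {s t u v : ℕ} (hright : u + v * p ^ k ≡ s * p ^ g + t [MOD p ^ q])
    (hcomm : t * (1 + p ^ f) ^ u ≡ t * (1 + p ^ f) + p ^ (f + g) * (s * (1 + v * p ^ k))
      [MOD p ^ (f + g + q)])
    (htop : Subgroup.closure {b ^ (p ^ (g + k) * s) * a ^ t, b ^ u * a ^ v} = ⊤) :
    u ≡ 1 [MOD p ^ g] := by
  have hu : ¬ p ∣ u := h.not_dvd_of_closure_eq_top hp.ne_one (dvd_pow_self p (by omega))
    ((dvd_pow_self p (by omega)).mul_right s) htop
  have ht : ¬ p ∣ t := (dvd_iff_of_add_modEq_add (dvd_pow_self p hq.ne')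
    ((dvd_pow_self p hk.ne').mul_left v) ((dvd_pow_self p hg.ne').mul_left s) hright).not.mp hu
  have hcomm' : t * (1 + p ^ f) ^ u ≡ t * (1 + p ^ f) ^ 1 [MOD p ^ (f + g)] :=
    (hcomm.of_dvd (pow_dvd_pow p (by omega))).trans (by simp [Nat.ModEq])
  have hcop : Nat.gcd (p ^ (f + g)) t = 1 :=
    (hp.coprime_iff_not_dvd.mpr ht).pow_left (f + g)
  exact (one_add_prime_pow_pow_modEq_iff hp hf hpf g u 1).mp
    (hcomm'.cancel_left_of_coprime hcop)

theorem metacyclicRelations_and_closure_eq_top_iff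
    (h : IsMetacyclicBasis (p ^ (f + g + q)) (p ^ (f + g + k)) (p ^ (f + g)) (1 + p ^ f) a b)
    (hp : p.Prime) (hpf : p = 2 → 1 < f) (hf : 0 < f) (hg : 0 < g) (hk : 0 < k) (hq : 0 < q)
    (hqf : q ≤ f) (j t u v : ℕ) :
    (MetacyclicRelations (p ^ (f + g + q)) (p ^ (f + g + k)) (p ^ (f + g)) (1 + p ^ f)
        (b ^ j * a ^ t) (b ^ u * a ^ v) ∧
        Subgroup.closure {b ^ j * a ^ t, b ^ u * a ^ v} = ⊤) ↔
      u ≡ 1 [MOD p ^ g] ∧ ∃ s, j = p ^ (g + k) * s ∧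
        u + v * p ^ k ≡ s * p ^ g + t [MOD p ^ q] ∧
        t * (1 + p ^ f) ^ u ≡ t * (1 + p ^ f) + p ^ (f + g) * (s * (1 + v * p ^ k))
          [MOD p ^ (f + g + q)] := by
  rw [h.metacyclicRelations_iff hp.pos hf hk hqf]
  constructor
  · rintro ⟨⟨s, rfl, hright, hcomm⟩, htop⟩
    exact ⟨h.modEq_one_of_closure_eq_top hp hpf hf hg hk hq hright hcomm htop,
      s, rfl, hright, hcomm⟩
  · rintro ⟨hu, s, rfl, hright, hcomm⟩
    have hr : 1 + p ^ f ≡ 1 [MOD p] := by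
      simpa using (Nat.modEq_zero_iff_dvd.mpr (dvd_pow_self p hf.ne')).add_left 1
    have hu' : ¬ p ∣ u := by
      rw [hu.dvd_iff (dvd_pow_self p hg.ne'), Nat.dvd_one]
      exact hp.ne_one
    have ht : ¬ p ∣ t := (dvd_iff_of_add_modEq_add (dvd_pow_self p hq.ne')
      ((dvd_pow_self p hk.ne').mul_left v) ((dvd_pow_self p hg.ne').mul_left s) hright).not.mp hu'
    exact ⟨⟨s, rfl, hright, hcomm⟩, h.closure_eq_top_of_not_dvd hp hr
      ((dvd_pow_self p (by omega)).mul_right s) ht hu'⟩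

theorem exists_forall_metacyclicRelations_iff
    (h : IsMetacyclicBasis (p ^ (f + g + q)) (p ^ (f + g + k)) (p ^ (f + g)) (1 + p ^ f) a b)
    (hp : p.Prime) (hpf : p = 2 → 1 < f) (hf : 0 < f) (hg : 0 < g) (hk : 0 < k) (hq : 0 < q)
    (hqf : q ≤ f) {u : ℕ} (hu : u ≡ 1 [MOD p ^ g]) (v : ℕ) :
    ∃ ρ τ, ∀ j t,
      (MetacyclicRelations (p ^ (f + g + q)) (p ^ (f + g + k)) (p ^ (f + g)) (1 + p ^ f)
        (b ^ j * a ^ t) (b ^ u * a ^ v) ∧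
        Subgroup.closure {b ^ j * a ^ t, b ^ u * a ^ v} = ⊤) ↔
      j ≡ ρ [MOD p ^ (g + k + q)] ∧ t ≡ τ [MOD p ^ q] := by
  obtain ⟨σ, τ, hστ⟩ := exists_forall_exponent_system_modEq_iff (q := q) hp hf hg hk hu v
  refine ⟨p ^ (g + k) * σ, τ, fun j t => ?_⟩
  rw [h.metacyclicRelations_and_closure_eq_top_iff hp hpf hf hg hk hq hqf, and_iff_right hu]
  simp only [hστ, ← and_assoc, exists_and_right]
  refine and_congr_left fun _ => ?_
  rw [pow_add p (g + k) q]
  constructor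
  · rintro ⟨s, rfl, hs⟩
    exact hs.mul_left' _
  · intro hj
    obtain ⟨s, rfl⟩ := (hj.dvd_iff (dvd_mul_right _ _)).mpr (dvd_mul_right _ _)
    exact ⟨s, rfl, (Nat.ModEq.mul_left_cancel_iff' (pow_pos hp.pos _).ne').mp hj⟩

theorem card_generating_pairs
    (h : IsMetacyclicBasis (p ^ (f + g + q)) (p ^ (f + g + k)) (p ^ (f + g)) (1 + p ^ f) a b)
    (hp : p.Prime) (hpf : p = 2 → 1 < f) (hg : 0 < g) (hk : 0 < k) (hq : 0 < q) (hqf : q ≤ f) :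
    Nat.card {x : G × G // MetacyclicRelations (p ^ (f + g + q)) (p ^ (f + g + k)) (p ^ (f + g))
        (1 + p ^ f) x.1 x.2 ∧ Subgroup.closure {x.1, x.2} = ⊤} =
      p ^ (f + k) * p ^ (f + g + q) * (p ^ (f - q) * p ^ (f + g)) := by
  let N := p ^ (f + g + q)
  let M := p ^ (f + g + k)
  let e : Fin M × Fin N ≃ G :=
    Equiv.ofBijective _ (h.bijective_right_pow_mul_left_pow (pow_pos hp.pos _) (pow_pos hp.pos _))
  let P (y : Fin M × Fin N) : Prop := (y.1 : ℕ) ≡ 1 [MOD p ^ g]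
  let Q (y x : Fin M × Fin N) : Prop :=
    MetacyclicRelations N M (p ^ (f + g)) (1 + p ^ f) (e x) (e y) ∧
      Subgroup.closure {e x, e y} = ⊤
  have hQP (y x) (hyx : Q y x) : P y :=
    ((h.metacyclicRelations_and_closure_eq_top_iff hp hpf (by omega) hg hk hq hqf ..).mp hyx).1
  have card_P : Nat.card {y // P y} = p ^ (f + k) * p ^ (f + g + q) := by
    rw [Nat.card_congr (Equiv.prodSubtypeFstEquivSubtypeProd
      (p := fun y : Fin M => (y : ℕ) ≡ 1 [MOD p ^ g])), Nat.card_prod,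
      card_fin_prime_pow_modEq hp (by omega), Nat.card_fin, show f + g + k - g = f + k by omega]
  have card_Q (y) (hy : P y) : Nat.card {x // Q y x} = p ^ (f - q) * p ^ (f + g) := by
    obtain ⟨ρ, τ, hρτ⟩ :=
      h.exists_forall_metacyclicRelations_iff hp hpf (by omega) hg hk hq hqf hy y.2
    have hQ (x : Fin M × Fin N) : Q y x ↔
        (x.1 : ℕ) ≡ ρ [MOD p ^ (g + k + q)] ∧ (x.2 : ℕ) ≡ τ [MOD p ^ q] := hρτ x.1 x.2
    rw [Nat.card_congr (Equiv.subtypeEquivRight hQ), Nat.card_congr (Equiv.subtypeProdEquivProd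
      (p := fun j : Fin M => (j : ℕ) ≡ ρ [MOD p ^ (g + k + q)])
      (q := fun t : Fin N => (t : ℕ) ≡ τ [MOD p ^ q])), Nat.card_prod,
      card_fin_prime_pow_modEq hp (by omega), card_fin_prime_pow_modEq hp (by omega),
      show f + g + k - (g + k + q) = f - q by omega, Nat.add_sub_cancel]
  rw [← card_P, ← card_subtype_and_prod card_Q]
  refine Nat.card_congr (((Equiv.prodComm _ _).trans (e.prodCongr e)).subtypeEquiv ?_).symm
  exact fun yx => and_iff_right_of_imp (hQP yx.1 yx.2)

end IsMetacyclicBasis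

theorem MetacyclicGroup.card_mulAut_prime_pow (hp : p.Prime) (hpf : p = 2 → 1 < f) (hg : 0 < g)
    (hk : 0 < k) (hq : 0 < q) (hqf : q ≤ f) :
    Nat.card (MulAut (MetacyclicGroup (p ^ (f + g + q)) (p ^ (f + g + k)) (p ^ (f + g))
        (1 + p ^ f))) = p ^ (f + k) * p ^ (f + g + q) * (p ^ (f - q) * p ^ (f + g)) := by
  have hr : (1 + p ^ f) ^ p ^ (f + g + k) ≡ 1 [MOD p ^ (f + g + q)] :=
    (pow_modEq_one_of_pow_dvd (by omega) (by simp [Nat.ModEq]) dvd_rfl).of_dvd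
      (pow_dvd_pow p (show f + g + q ≤ f + g + k + f by omega))
  have hm : p ^ (f + g) * (1 + p ^ f) ≡ p ^ (f + g) [MOD p ^ (f + g + q)] := by
    have hdvd : p ^ (f + g + q) ∣ p ^ (f + g) * p ^ f := by
      rw [← pow_add]
      exact pow_dvd_pow p (by omega)
    simpa [mul_add] using (Nat.modEq_zero_iff_dvd.mpr hdvd).add_left (p ^ (f + g))
  rw [card_mulAut (pow_pos hp.pos _) (pow_pos hp.pos _)]
  exact (isMetacyclicBasis (pow_ne_zero _ hp.ne_zero) hr hm).card_generating_pairs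
    hp hpf hg hk hq hqf

end PrimePower

theorem stmt_16_general (p d e h f : ℕ) (hp : p.Prime) (hpf : p = 2 → 1 < f) (hhd : h - d ≤ f)
    (hfd : f < d) (hdh : d < h) (hhe : h < e) :
    Nat.card (MulAut (M3 p d e h f)) = p ^ (2 * d + e + 2 * f - h) := by
  obtain ⟨g, rfl⟩ := Nat.exists_eq_add_of_le hfd.le
  obtain ⟨q, rfl⟩ := Nat.exists_eq_add_of_le hdh.le
  obtain ⟨k, rfl⟩ := Nat.exists_eq_add_of_le hhe.le
  have hexp : f + g + (f + g + q + k) - (f + g + q) = f + g + k := by omega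
  change Nat.card (MulAut (MetacyclicGroup _ (p ^ (f + g + (f + g + q + k) - (f + g + q))) _ _)) = _
  rw [hexp, MetacyclicGroup.card_mulAut_prime_pow hp hpf (by omega) (by omega) (by omega)
    (by omega), ← pow_add, ← pow_add, ← pow_add]
  congr 1
  omega

/-- For `h - d ≤ f < d < h < e`, the order of `Aut(M₃(p,d,e,h,f))` equals
`p^(2d+e+2f-h)`. -/
theorem stmt_16 (p d e h f : ℕ) (hp : p.Prime) (hodd : Odd p)
    (hf : 0 < f) (hhd : h - d ≤ f) (hfd : f < d) (hdh : d < h) (hhe : h < e) :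
    Nat.card (MulAut (M3 p d e h f)) = p ^ (2 * d + e + 2 * f - h) :=
  stmt_16_general p d e h f hp (fun h2 => absurd (h2 ▸ hodd) (by decide)) hhd hfd hdh hhe
end

section
/- Let p be an odd prime and let d, e, f be positive integers with d < e, f ≤ e and e ≤ d + f, and let G = M₁(p,d,e,f). Consider the action of the automorphism group Aut(G) on the set of exact (p^d, p^e)-bicyclic pairs of G given by φ·(α, β) = (φ(α), φ(β)). Then the number of orbits of this action equals: 1 if d < f = e; p^{e−f−1}(p−1) if d ≤ f < e ≤ d+f; and p^{d+e−2f−1}(p−1) if f < d < e ≤ d+f. -/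
/-- The equivalence on exact `(m,n)`-bicyclic pairs of `G` induced by the componentwise
action of `Aut(G)`: two pairs are equivalent iff some automorphism maps one to the other.
The orbits of the action are exactly the equivalence classes. -/
def bicyclicPairSetoid (G : Type*) [Group G] (m n : ℕ) :
    Setoid {x : G × G // IsExactBicyclicPair m n x.1 x.2} where
  r x y := ∃ φ : MulAut G, φ x.1.1 = y.1.1 ∧ φ x.1.2 = y.1.2
  iseqv := by
    refine ⟨fun x => ⟨MulEquiv.refl G, rfl, rfl⟩, ?_, ?_⟩
    · rintro x y ⟨φ, h1, h2⟩
      exact ⟨φ.symm, by rw [← h1]; exact φ.symm_apply_apply _,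
        by rw [← h2]; exact φ.symm_apply_apply _⟩
    · rintro x y z ⟨φ, h1, h2⟩ ⟨ψ, h3, h4⟩
      exact ⟨φ.trans ψ, by simp [MulEquiv.trans_apply, h1, h3],
        by simp [MulEquiv.trans_apply, h2, h4]⟩

/-!
An automorphism of `G = M₁(p,d,e,f)` fixing both members of an exact pair is trivial, so `Aut(G)`
acts freely on exact pairs, and all orbits have the size of the orbit of `(b, a)`. By the
presentation of `G`, that orbit consists of the exact pairs `(α, β)` with `βα = αβ^(1 + p^f)`. The
number of orbits is therefore the number of all exact pairs divided by the number of those which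
satisfy this relation.

Write `G` as `ZMod (p^e) ⋊ ZMod (p^d)`, where `j` acts as multiplication by `χ j ≡ 1 [mod p^f]`.
For `d < e`, the elements `α = (s, r)` and `β = (u, t)` form an exact pair iff `p^d s = 0` and `r`,
`u` are units. If `f = e` then `G` is abelian and the relation always holds. If `f < e`, it says
that `p^f t = 0` and that `χ r = 1 + p^f q` for a unit `q` determined by `s`, `u`, `t`. As `χ` maps
onto the residues `≡ 1 [mod p^f]` with a kernel of order `p^(d + f - e)`, the last equation has
`p^(d + f - e)` solutions `r`, all of them units.
-/

section GeomSum

variable {R : Type*} [CommRing R] {p : ℕ} {x : R}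

lemma exists_geom_sum_eq_mul_one_add (hodd : Odd p) (hx : (p : R) ∣ x - 1) :
    ∃ z : R, ∑ i ∈ Finset.range p, x ^ i = p * (1 + p * z) := by
  obtain ⟨y, hy⟩ := hx
  obtain rfl : x = 1 + p * y := by rw [← hy]; ring
  obtain ⟨z, hz⟩ := odd_sq_dvd_geom_sum₂_sub (1 : R) y hodd
  simp only [one_pow, mul_one] at hz
  exact ⟨z, by linear_combination hz⟩

end GeomSum

lemma addOrderOf_eq_of_isUnit {n : ℕ} {u : ZMod n} (hu : IsUnit u) : addOrderOf u = n := by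
  simpa using addOrderOf_injective (AddMonoidHom.mulRight u) hu.mul_left_injective 1

namespace ZModPrimePow

section

variable {p n : ℕ}

lemma map_eq_zero_of_natCast_dvd {R : Type*} [CommRing R] (π : R →+* ZMod p) {x : R}
    (hx : (p : R) ∣ x) : π x = 0 := by
  obtain ⟨y, rfl⟩ := hx
  rw [map_mul, map_natCast, ZMod.natCast_self, zero_mul]

lemma isUnit_add_natCast_mul {u : ZMod (p ^ n)} (hu : IsUnit u) (z : ZMod (p ^ n)) :
    IsUnit (u + p * z) := by
  have hp : IsNilpotent (p : ZMod (p ^ n)) := ⟨n, ZMod.natCast_pow_eq_zero_of_le p le_rfl⟩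
  exact ((Commute.all _ z).isNilpotent_mul_right hp).isUnit_add_left_of_commute hu (Commute.all _ _)

variable [NeZero p]

lemma pow_mul_eq_zero_iff {k : ℕ} {x : ZMod (p ^ n)} :
    (p : ZMod (p ^ n)) ^ k * x = 0 ↔ (p : ZMod (p ^ n)) ^ (n - k) ∣ x := by
  refine ⟨fun h => ?_, ?_⟩
  · obtain ⟨x, rfl⟩ := ZMod.natCast_zmod_surjective x
    obtain hk | hk := le_total n k
    · simp [Nat.sub_eq_zero_of_le hk]
    · have hdvd : p ^ k * p ^ (n - k) ∣ p ^ k * x := by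
        rw [← pow_add, Nat.add_sub_cancel' hk, ← ZMod.natCast_eq_zero_iff]
        exact_mod_cast h
      exact_mod_cast Nat.cast_dvd_cast (α := ZMod (p ^ n))
        (Nat.dvd_of_mul_dvd_mul_left (pow_pos (NeZero.pos p) k) hdvd)
  · rintro ⟨y, rfl⟩
    rw [← mul_assoc, ← pow_add, ZMod.natCast_pow_eq_zero_of_le p (by omega), zero_mul]

lemma dvd_of_pow_mul_eq_zero {k : ℕ} (hk : k < n) {x : ZMod (p ^ n)}
    (h : (p : ZMod (p ^ n)) ^ k * x = 0) : (p : ZMod (p ^ n)) ∣ x :=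
  (dvd_pow_self _ (Nat.sub_pos_of_lt hk).ne').trans (pow_mul_eq_zero_iff.mp h)

lemma card_pow_torsion (k : ℕ) :
    Nat.card {x : ZMod (p ^ n) // (p : ZMod (p ^ n)) ^ k * x = 0} = p ^ min k n := by
  have h := IsAddCyclic.card_nsmulAddMonoidHom_ker (ZMod (p ^ n)) (p ^ k)
  rw [Nat.card_zmod, Nat.gcd_comm] at h
  have hgcd : (p ^ k).gcd (p ^ n) = p ^ min k n := by
    obtain hk | hk := le_total k n
    · rw [min_eq_left hk, Nat.gcd_eq_left (pow_dvd_pow p hk)]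
    · rw [min_eq_right hk, Nat.gcd_eq_right (pow_dvd_pow p hk)]
  rw [← hgcd, ← h]
  exact Nat.card_congr (Equiv.subtypeEquivRight fun x => by simp [AddMonoidHom.mem_ker])

end

variable {p : ℕ} [Fact p.Prime] {n : ℕ}

lemma isUnit_iff_not_dvd (hn : 0 < n) {x : ZMod (p ^ n)} :
    IsUnit x ↔ ¬ (p : ZMod (p ^ n)) ∣ x := by
  have hp : p.Prime := Fact.out
  obtain ⟨x, rfl⟩ := ZMod.natCast_zmod_surjective x
  rw [ZMod.isUnit_natCast_iff_not_dvd_pow hp hn]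
  refine not_congr ⟨Nat.cast_dvd_cast, fun h => ?_⟩
  rw [← ZMod.natCast_eq_zero_iff, ← map_natCast (ZMod.castHom (dvd_pow_self p hn.ne') (ZMod p))]
  exact map_eq_zero_of_natCast_dvd _ h

lemma pow_pred_mul_eq_zero_iff_not_isUnit (hn : 0 < n) {x : ZMod (p ^ n)} :
    (p : ZMod (p ^ n)) ^ (n - 1) * x = 0 ↔ ¬ IsUnit x := by
  rw [pow_mul_eq_zero_iff, isUnit_iff_not_dvd hn, not_not,
    Nat.sub_sub_self hn, pow_one]

lemma card_isUnit (hn : 0 < n) :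
    Nat.card {x : ZMod (p ^ n) // IsUnit x} = p ^ (n - 1) * (p - 1) := by
  rw [← Nat.totient_prime_pow Fact.out hn, ← ZMod.card_units_eq_totient, ← Nat.card_eq_fintype_card]
  exact Nat.card_congr (Equiv.ofInjective _ Units.val_injective).symm

lemma orderOf_one_add_prime_pow (hodd : Odd p) {f : ℕ} (hf : 0 < f) (hfn : f ≤ n) :
    orderOf (1 + p ^ f : ZMod (p ^ n)) = p ^ (n - f) := by
  have hp : p.Prime := Fact.out
  have hp3 : 3 ≤ p := by
    have := hp.two_le
    rcases hodd with ⟨k, rfl⟩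
    omega
  obtain ⟨m, rfl⟩ := Nat.exists_eq_add_of_le' hfn
  have := ZMod.orderOf_one_add_mul_prime_pow hp f hf.ne' (by nlinarith) 1
    (by exact_mod_cast hp.one_lt.ne' ∘ Nat.dvd_one.mp) m
  simpa using this

lemma exists_one_add_prime_pow_pow_eq (hodd : Odd p) {f : ℕ} (hf : 0 < f) (hfn : f ≤ n)
    {x : ZMod (p ^ n)} (hx : (p : ZMod (p ^ n)) ^ f ∣ x - 1) :
    ∃ k : ℕ, (1 + p ^ f : ZMod (p ^ n)) ^ k = x := by
  let c : ZMod (p ^ n) := 1 + p ^ f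
  let S : Set (ZMod (p ^ n)) := {y | (p : ZMod (p ^ n)) ^ f ∣ y - 1}
  have hsub : (c ^ ·) '' Set.Iio (orderOf c) ⊆ S := by
    rintro _ ⟨k, -, rfl⟩
    exact (by simp [c] : _ ∣ c - 1).trans (sub_one_dvd_pow_sub_one c k)
  have hcard : S.ncard = p ^ (n - f) := by
    rw [← Nat.card_coe_set_eq, ← min_eq_left (Nat.sub_le n f), ← card_pow_torsion]
    refine Nat.card_congr ((Equiv.subRight (1 : ZMod (p ^ n))).subtypeEquiv fun y => ?_)
    rw [pow_mul_eq_zero_iff, Nat.sub_sub_self hfn]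
    rfl
  have himage : ((c ^ ·) '' Set.Iio (orderOf c)).ncard = orderOf c := by
    rw [pow_injOn_Iio_orderOf.ncard_image, Set.ncard_Iio_nat]
  have heq := Set.eq_of_subset_of_ncard_le hsub
    (by rw [hcard, himage, orderOf_one_add_prime_pow hodd hf hfn])
  obtain ⟨k, -, hk⟩ := heq.ge hx
  exact ⟨k, hk⟩

end ZModPrimePow

section BicyclicPairs

open Subgroup

variable {G H : Type*} [Group G] [Group H] {m n : ℕ}

lemma isExactBicyclicPair_of_card [Finite G] {α β : G} (hα : orderOf α = m) (hβ : orderOf β = n)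
    (hdisj : Disjoint (zpowers α) (zpowers β)) (hcard : m * n = Nat.card G) :
    IsExactBicyclicPair m n α β := by
  refine ⟨hα, hβ, hdisj.eq_bot, fun g => ?_⟩
  have hcompl : IsComplement' (zpowers α) (zpowers β) :=
    isComplement'_of_card_mul_and_disjoint
      (by rw [Nat.card_zpowers, Nat.card_zpowers, hα, hβ, hcard]) hdisj
  obtain ⟨⟨⟨_, i, rfl⟩, ⟨_, j, rfl⟩⟩, rfl⟩ := hcompl.surjective g
  exact ⟨i, j, rfl⟩

namespace IsExactBicyclicPair

variable {α β : G}

lemma hom_ext (h : IsExactBicyclicPair m n α β) {φ ψ : G →* H} (hα : φ α = ψ α)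
    (hβ : φ β = ψ β) : φ = ψ := by
  ext g
  obtain ⟨i, j, rfl⟩ := h.2.2.2 g
  simp only [map_mul, map_zpow, hα, hβ]

lemma map (h : IsExactBicyclicPair m n α β) (ψ : G ≃* H) :
    IsExactBicyclicPair m n (ψ α) (ψ β) := by
  obtain ⟨hα, hβ, hinf, hgen⟩ := h
  refine ⟨(ψ.orderOf_eq α).trans hα, (ψ.orderOf_eq β).trans hβ, ?_, fun g => ?_⟩
  · have := congrArg (Subgroup.map (ψ : G →* H)) hinf
    rwa [Subgroup.map_inf _ _ _ ψ.injective, MonoidHom.map_zpowers, MonoidHom.map_zpowers,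
      Subgroup.map_bot] at this
  · obtain ⟨i, j, hg⟩ := hgen (ψ.symm g)
    exact ⟨i, j, by rw [← map_zpow, ← map_zpow, ← map_mul, ← hg, ψ.apply_symm_apply]⟩

lemma map_iff (ψ : G ≃* H) :
    IsExactBicyclicPair m n (ψ α) (ψ β) ↔ IsExactBicyclicPair m n α β :=
  ⟨fun h => by simpa using h.map ψ.symm, fun h => h.map ψ⟩

end IsExactBicyclicPair

/-- The set of exact `(m, n)`-bicyclic pairs of `G` as a type, on which `MulAut G` acts
componentwise. -/
abbrev ExactBicyclicPair (G : Type*) [Group G] (m n : ℕ) : Type _ :=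
  {x : G × G // IsExactBicyclicPair m n x.1 x.2}

namespace ExactBicyclicPair

instance : MulAction (MulAut G) (ExactBicyclicPair G m n) where
  smul φ x := ⟨(φ x.1.1, φ x.1.2), x.2.map φ⟩
  one_smul _ := rfl
  mul_smul _ _ _ := rfl

lemma smul_eq_iff {φ : MulAut G} {x y : ExactBicyclicPair G m n} :
    φ • x = y ↔ φ x.1.1 = y.1.1 ∧ φ x.1.2 = y.1.2 :=
  Subtype.ext_iff.trans Prod.ext_iff

lemma mem_orbit_iff {x y : ExactBicyclicPair G m n} : y ∈ MulAction.orbit (MulAut G) x ↔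
    ∃ φ : MulAut G, φ x.1.1 = y.1.1 ∧ φ x.1.2 = y.1.2 :=
  exists_congr fun _ => smul_eq_iff

lemma orbitRel_eq_bicyclicPairSetoid :
    MulAction.orbitRel (MulAut G) (ExactBicyclicPair G m n) = bicyclicPairSetoid G m n :=
  Setoid.ext fun _ _ => (Setoid.comm' _).trans mem_orbit_iff

lemma stabilizer_eq_bot (x : ExactBicyclicPair G m n) :
    MulAction.stabilizer (MulAut G) x = ⊥ := by
  refine (eq_bot_iff_forall _).mpr fun φ hφ => ?_
  obtain ⟨hα, hβ⟩ := smul_eq_iff.mp hφ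
  exact MulEquiv.toMonoidHom_injective (x.2.hom_ext (ψ := MonoidHom.id G) hα hβ)

lemma card_quotient_mul_card_orbit (x : ExactBicyclicPair G m n) :
    Nat.card (Quotient (bicyclicPairSetoid G m n)) * Nat.card (MulAction.orbit (MulAut G) x) =
      Nat.card (ExactBicyclicPair G m n) := by
  have horbit : Nat.card (MulAction.orbit (MulAut G) x) = Nat.card (MulAut G) := by
    rw [Nat.card_coe_set_eq, ← MulAction.index_stabilizer, stabilizer_eq_bot, index_bot]
  rw [horbit, ← orbitRel_eq_bicyclicPairSetoid, ← Nat.card_prod]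
  exact Nat.card_congr (MulAction.selfEquivOrbitsQuotientProd stabilizer_eq_bot).symm

end ExactBicyclicPair

lemma eq_one_of_pow_pow_eq_one {S : Subgroup G} {p : ℕ} (hS : ∀ g ∈ S, g ^ p = 1 → g = 1)
    {g : G} (hg : g ∈ S) {k : ℕ} (hgk : g ^ p ^ k = 1) : g = 1 := by
  induction k generalizing g with
  | zero => simpa using hgk
  | succ k ih => exact hS g hg (ih (pow_mem hg p) (by rwa [← pow_mul, ← pow_succ']))

lemma disjoint_zpowers_of_orderOf_map {p k : ℕ} (hp : p ≠ 0) {α β : G} (π : G →* H)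
    (hα : orderOf (π α) = orderOf α) (hβ : orderOf β = p ^ (k + 1)) (hπβ : π β ^ p ^ k = 1) :
    Disjoint (zpowers α) (zpowers β) := by
  rw [disjoint_iff, eq_bot_iff_forall]
  rintro g ⟨hgα, hgβ⟩
  have hgk : g ^ p ^ (k + 1) = 1 := by
    obtain ⟨j, rfl⟩ := mem_zpowers_iff.mp hgβ
    rw [← zpow_natCast, zpow_comm, zpow_natCast, ← hβ, pow_orderOf_eq_one, one_zpow]
  refine eq_one_of_pow_pow_eq_one (S := zpowers α ⊓ zpowers β) ?_ ⟨hgα, hgβ⟩ hgk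
  rintro g ⟨hgα, hgβ⟩ hgp
  have hπg : π g = 1 := by
    obtain ⟨j, rfl⟩ := mem_zpowers_iff.mp hgβ
    obtain ⟨c, rfl⟩ : (p ^ k : ℤ) ∣ j := by
      rw [← zpow_natCast, ← zpow_mul, ← orderOf_dvd_iff_zpow_eq_one, hβ, pow_succ] at hgp
      exact Int.dvd_of_mul_dvd_mul_right (mod_cast hp : (p : ℤ) ≠ 0) (mod_cast hgp)
    rw [map_zpow, zpow_mul, ← Nat.cast_pow, zpow_natCast, hπβ, one_zpow]
  obtain ⟨i, rfl⟩ := mem_zpowers_iff.mp hgα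
  rwa [map_zpow, ← orderOf_dvd_iff_zpow_eq_one, hα, orderOf_dvd_iff_zpow_eq_one] at hπg

end BicyclicPairs

namespace M1

variable {p d e f : ℕ}

lemma a_pow_eq_one : M1a p d e f ^ p ^ e = 1 :=
  PresentedGroup.one_of_mem (rels := M1rels p d e f) (.inl rfl)

lemma b_pow_eq_one : M1b p d e f ^ p ^ d = 1 :=
  PresentedGroup.one_of_mem (rels := M1rels p d e f) (.inr (.inl rfl))

lemma a_mul_b : M1a p d e f * M1b p d e f = M1b p d e f * M1a p d e f ^ (1 + p ^ f) := by
  have h := PresentedGroup.one_of_mem (rels := M1rels p d e f) (.inr (.inr rfl))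
  simp only [map_mul, map_inv, map_pow] at h
  rwa [mul_inv_eq_one, mul_assoc, inv_mul_eq_iff_eq_mul] at h

variable {H : Type*} [Group H]

lemma exists_lift {x y : H} (hx : x ^ p ^ e = 1) (hy : y ^ p ^ d = 1)
    (hxy : x * y = y * x ^ (1 + p ^ f)) :
    ∃ φ : M1 p d e f →* H, φ (M1a p d e f) = x ∧ φ (M1b p d e f) = y := by
  have hrels : ∀ r ∈ M1rels p d e f, FreeGroup.lift ![x, y] r = 1 := by
    rintro _ (rfl | rfl | rfl)
    · simpa using hx
    · simpa using hy
    · have hconj : y⁻¹ * x * y = x ^ (1 + p ^ f) := by rw [mul_assoc, hxy, inv_mul_cancel_left]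
      simp [hconj]
  exact ⟨PresentedGroup.toGroup hrels, PresentedGroup.toGroup.of hrels,
    PresentedGroup.toGroup.of hrels⟩

lemma hom_ext {φ ψ : M1 p d e f →* H} (ha : φ (M1a p d e f) = ψ (M1a p d e f))
    (hb : φ (M1b p d e f) = ψ (M1b p d e f)) : φ = ψ :=
  PresentedGroup.ext (Fin.forall_fin_two.mpr ⟨ha, hb⟩)

variable [Finite (M1 p d e f)]

lemma exists_mulAut_iff {x y : M1 p d e f} (h : IsExactBicyclicPair (p ^ d) (p ^ e) x y) :
    (∃ φ : MulAut (M1 p d e f), φ (M1b p d e f) = x ∧ φ (M1a p d e f) = y) ↔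
      y * x = x * y ^ (1 + p ^ f) := by
  constructor
  · rintro ⟨φ, rfl, rfl⟩
    rw [← map_mul, a_mul_b, map_mul, map_pow]
  · intro hyx
    obtain ⟨φ, ha, hb⟩ := exists_lift (orderOf_dvd_iff_pow_eq_one.mp h.2.1.dvd)
      (orderOf_dvd_iff_pow_eq_one.mp h.1.dvd) hyx
    have hφ : Function.Surjective φ := fun g => by
      obtain ⟨i, j, rfl⟩ := h.2.2.2 g
      exact ⟨M1b p d e f ^ i * M1a p d e f ^ j, by simp only [map_mul, map_zpow, ha, hb]⟩
    exact ⟨.ofBijective φ ⟨Finite.injective_iff_surjective.mpr hφ, hφ⟩, hb, ha⟩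

lemma card_quotient_mul_card_relation
    (hba : IsExactBicyclicPair (p ^ d) (p ^ e) (M1b p d e f) (M1a p d e f)) :
    Nat.card (Quotient (bicyclicPairSetoid (M1 p d e f) (p ^ d) (p ^ e))) *
        Nat.card {x : ExactBicyclicPair (M1 p d e f) (p ^ d) (p ^ e) //
          x.1.2 * x.1.1 = x.1.1 * x.1.2 ^ (1 + p ^ f)} =
      Nat.card (ExactBicyclicPair (M1 p d e f) (p ^ d) (p ^ e)) := by
  rw [← ExactBicyclicPair.card_quotient_mul_card_orbit ⟨(M1b p d e f, M1a p d e f), hba⟩]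
  congr 1
  refine Nat.card_congr (Equiv.subtypeEquivRight fun x => ?_)
  rw [ExactBicyclicPair.mem_orbit_iff, exists_mulAut_iff x.2]

end M1

section TwistedProduct

open Multiplicative

variable {A R : Type*} [AddCommGroup A] [CommRing R]

/-- The action of `A` on the additive group of `R` in which `j` multiplies by `χ j`, written
multiplicatively so that it can be used to form a semidirect product. -/
def twist (χ : AddChar A R) : Multiplicative A →* MulAut (Multiplicative R) :=
  (MulAutMultiplicative R).symm.toMonoidHom.comp
    ((DistribMulAction.toAddAut Rˣ R).comp χ.toMonoidHom.toHomUnits)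

/-- The semidirect product `R ⋊ A` in which `j : A` acts on `R` as multiplication by `χ j`. For
`A = ZMod (p ^ d)`, `R = ZMod (p ^ e)` and `χ 1 = 1 + p ^ f` it is a model of `M₁(p,d,e,f)`, with
`a = (1, 0)` and `b = (0, -1)`: the sign is there because `1 : A` acts as `g ↦ b⁻¹ g b`. -/
abbrev TwistedProduct (χ : AddChar A R) : Type _ := Multiplicative R ⋊[twist χ] Multiplicative A

namespace TwistedProduct

variable {χ : AddChar A R}

/-- The element of `R ⋊ A` with coordinates `x : R` and `j : A`. -/
def mk (x : R) (j : A) : TwistedProduct χ := ⟨ofAdd x, ofAdd j⟩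

/-- The `R`-coordinate of an element of `R ⋊ A`. -/
def fst (g : TwistedProduct χ) : R := g.left.toAdd

/-- The `A`-coordinate of an element of `R ⋊ A`. -/
def snd (g : TwistedProduct χ) : A := g.right.toAdd

@[simp] lemma fst_mk (x : R) (j : A) : (mk x j : TwistedProduct χ).fst = x := rfl

@[simp] lemma snd_mk (x : R) (j : A) : (mk x j : TwistedProduct χ).snd = j := rfl

@[simp] lemma fst_one : (1 : TwistedProduct χ).fst = 0 := rfl

@[simp] lemma snd_one : (1 : TwistedProduct χ).snd = 0 := rfl

@[simp] lemma fst_mul (g h : TwistedProduct χ) : (g * h).fst = g.fst + χ g.snd * h.fst := rfl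

@[simp] lemma snd_mul (g h : TwistedProduct χ) : (g * h).snd = g.snd + h.snd := rfl

lemma ext_iff_coord {g h : TwistedProduct χ} : g = h ↔ g.fst = h.fst ∧ g.snd = h.snd :=
  SemidirectProduct.ext_iff

lemma snd_pow (g : TwistedProduct χ) (n : ℕ) : (g ^ n).snd = n • g.snd :=
  congrArg toAdd (map_pow SemidirectProduct.rightHom g n)

lemma fst_pow (g : TwistedProduct χ) (n : ℕ) :
    (g ^ n).fst = (∑ i ∈ Finset.range n, χ g.snd ^ i) * g.fst := by
  induction n with
  | zero => simp
  | succ n ih => rw [pow_succ', fst_mul, ih, Finset.sum_range_succ', Finset.sum_congr rfl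
      fun i _ => pow_succ' (χ g.snd) i, ← Finset.mul_sum]; ring

/-- The coordinates of `R ⋊ A`. -/
def equivProd (χ : AddChar A R) : TwistedProduct χ ≃ R × A :=
  SemidirectProduct.equivProd.trans (toAdd.prodCongr toAdd)

lemma inv_mk_zero (j : A) : (mk 0 j : TwistedProduct χ)⁻¹ = mk 0 (-j) :=
  inv_eq_of_mul_eq_one_right (by simp [ext_iff_coord])

lemma mk_one_pow_mul_mk_one_pow {A : Type*} [CommRing A] {χ : AddChar A R} (i j : ℕ) :
    (mk 1 0 : TwistedProduct χ) ^ i * mk 0 1 ^ j = mk (i : R) (j : A) := by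
  simp [ext_iff_coord, fst_pow, snd_pow]

instance [Finite A] [Finite R] : Finite (TwistedProduct χ) := .of_equiv _ (equivProd χ).symm

lemma natCard_eq : Nat.card (TwistedProduct χ) = Nat.card R * Nat.card A := by
  rw [Nat.card_congr (equivProd χ), Nat.card_prod]

end TwistedProduct

end TwistedProduct

section Presentation

open Multiplicative

lemma exists_zmodHom {H : Type*} [Group H] {n : ℕ} {x : H} (hx : x ^ n = 1) :
    ∃ φ : Multiplicative (ZMod n) →* H, ∀ k : ℕ, φ (ofAdd (k : ZMod n)) = x ^ k := by
  have hn : zmultiplesHom (Additive H) (Additive.ofMul x) n = 0 := by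
    rw [zmultiplesHom_apply, natCast_zsmul, ← ofMul_pow, hx, ofMul_one]
  refine ⟨AddMonoidHom.toMultiplicativeLeft (ZMod.lift n ⟨_, hn⟩), fun k => ?_⟩
  have hk := ZMod.lift_coe n ⟨_, hn⟩ k
  rw [zmultiplesHom_apply, natCast_zsmul, ← ofMul_pow, Int.cast_natCast] at hk
  exact congrArg Additive.toMul hk

namespace TwistedProduct

variable {m n c : ℕ} [NeZero m] [NeZero n] {χ : AddChar (ZMod m) (ZMod n)}

lemma exists_lift (hχ : χ 1 = c) {H : Type*} [Group H] {x y : H} (hx : x ^ n = 1) (hy : y ^ m = 1)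
    (hyx : SemiconjBy y x (x ^ c)) :
    ∃ φ : TwistedProduct χ →* H, ∀ i j : ℕ, φ (mk i j) = x ^ i * y ^ j := by
  obtain ⟨f₁, hf₁⟩ := exists_zmodHom hx
  obtain ⟨f₂, hf₂⟩ := exists_zmodHom hy
  have hyx_pow (i j : ℕ) : SemiconjBy (y ^ j) (x ^ i) (x ^ (c ^ j * i)) := by
    induction j with
    | zero => simp
    | succ j ih =>
      rw [pow_succ' y, pow_succ' c, mul_assoc, pow_mul x c]
      exact (hyx.pow_right _).mul_left ih
  refine ⟨SemidirectProduct.lift f₁ f₂ fun g => MonoidHom.ext fun r => ?_, fun i j => ?_⟩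
  · obtain ⟨j, hj⟩ := ZMod.natCast_zmod_surjective g.toAdd
    obtain ⟨i, hi⟩ := ZMod.natCast_zmod_surjective r.toAdd
    have hχj : χ (j : ZMod m) = (c ^ j : ℕ) := by
      rw [← nsmul_one, AddChar.map_nsmul_eq_pow, hχ, Nat.cast_pow]
    obtain rfl : g = ofAdd (j : ZMod m) := hj.symm
    obtain rfl : r = ofAdd (i : ZMod n) := hi.symm
    change f₁ (ofAdd (χ j * i)) = f₂ (ofAdd (j : ZMod m)) * f₁ (ofAdd (i : ZMod n)) *
      (f₂ (ofAdd (j : ZMod m)))⁻¹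
    rw [hχj, ← Nat.cast_mul, hf₁, hf₁, hf₂, eq_mul_inv_iff_mul_eq, (hyx_pow i j).eq]
  · change f₁ (ofAdd _) * f₂ (ofAdd _) = _
    rw [hf₁, hf₂]

end TwistedProduct

namespace M1

open TwistedProduct

variable {p d e f : ℕ} [NeZero p] {χ : AddChar (ZMod (p ^ d)) (ZMod (p ^ e))}

lemma exists_mulEquiv (hχ : χ 1 = 1 + p ^ f) : ∃ ψ : M1 p d e f ≃* TwistedProduct χ,
    ψ (M1a p d e f) = mk 1 0 ∧ ψ (M1b p d e f) = mk 0 (-1) := by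
  have hχc : χ 1 = (1 + p ^ f : ℕ) := by rw [hχ]; norm_cast
  have hχinv : χ (-1) * (1 + p ^ f) = 1 := by
    rw [← hχ, ← AddChar.map_add_eq_mul, neg_add_cancel, AddChar.map_zero_eq_one]
  obtain ⟨φ, hφa, hφb⟩ : ∃ φ : M1 p d e f →* TwistedProduct χ,
      φ (M1a p d e f) = mk 1 0 ∧ φ (M1b p d e f) = mk 0 (-1) :=
    M1.exists_lift (by simp [ext_iff_coord, fst_pow, snd_pow])
      (by simp [ext_iff_coord, fst_pow, snd_pow]) (by simp [ext_iff_coord, fst_pow, snd_pow, hχinv])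
  obtain ⟨ψ, hψ⟩ := TwistedProduct.exists_lift hχc (a_pow_eq_one (d := d) (f := f))
    (y := (M1b p d e f)⁻¹) (by rw [inv_pow, b_pow_eq_one, inv_one]) (.inv_symm_left a_mul_b.symm)
  refine ⟨φ.toMulEquiv ψ (hom_ext ?_ ?_) (MonoidHom.ext fun g => ?_), hφa, hφb⟩
  · simpa [hφa] using hψ 1 0
  · simpa [hφb, ← inv_mk_zero, inv_eq_iff_eq_inv] using hψ 0 1
  · obtain ⟨i, hi⟩ := ZMod.natCast_zmod_surjective g.fst
    obtain ⟨j, hj⟩ := ZMod.natCast_zmod_surjective g.snd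
    obtain rfl : mk (i : ZMod (p ^ e)) (j : ZMod (p ^ d)) = g := ext_iff_coord.mpr ⟨hi, hj⟩
    rw [MonoidHom.comp_apply, hψ, map_mul, map_pow, map_pow, map_inv, hφa, hφb, inv_mk_zero,
      neg_neg, mk_one_pow_mul_mk_one_pow, MonoidHom.id_apply]

end M1

end Presentation

namespace TwistedProduct

open Multiplicative

section

variable {A R : Type*} [AddCommGroup A] [CommRing R] {χ : AddChar A R} {p : ℕ}

lemma exists_fst_pow_pow_eq (hodd : Odd p) (hχ : ∀ j, (p : R) ∣ χ j - 1)
    (g : TwistedProduct χ) (k : ℕ) : ∃ z : R, (g ^ p ^ k).fst = p ^ k * (1 + p * z) * g.fst := by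
  induction k with
  | zero => exact ⟨0, by simp⟩
  | succ k ih =>
    obtain ⟨z, hz⟩ := ih
    obtain ⟨w, hw⟩ := exists_geom_sum_eq_mul_one_add hodd (hχ (g ^ p ^ k).snd)
    refine ⟨w + z + p * w * z, ?_⟩
    rw [pow_succ p, pow_mul, fst_pow, hw, hz]
    ring

/-- The homomorphism `(x, j) ↦ ξ x + σ j`, for `ξ` invariant under the action of `A`. -/
def sumHom {S : Type*} [AddCommGroup S] (ξ : R →+ S) (σ : A →+ S)
    (hξ : ∀ j x, ξ (χ j * x) = ξ x) : TwistedProduct χ →* Multiplicative S where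
  toFun g := ofAdd (ξ g.fst + σ g.snd)
  map_one' := by simp
  map_mul' g h := by
    rw [fst_mul, snd_mul, map_add ξ, map_add σ, hξ, add_add_add_comm]
    rfl

lemma map_fst_mul_map_eq_zero {S : Type*} [CommRing S] {π : R →+* S} {σ : A →+ S}
    (hπχ : ∀ j, π (χ j) = 1) {α β : TwistedProduct χ} {m n : ℕ} (h : IsExactBicyclicPair m n α β)
    (hπ : π α.fst = 0) (hσ : σ α.snd = 0) (j : A) : π β.fst * σ j = 0 := by
  -- The functional `g ↦ π β.fst * σ g.snd - σ β.snd * π g.fst` vanishes on both `α` and `β`.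
  let θ : TwistedProduct χ →* Multiplicative S :=
    sumHom ((AddMonoidHom.mulLeft (-σ β.snd)).comp π) ((AddMonoidHom.mulLeft (π β.fst)).comp σ)
      (by simp [hπχ])
  have hθ : θ = 1 := h.hom_ext (by simp [θ, sumHom, hπ, hσ]) (by simp [θ, sumHom, mul_comm])
  simpa [θ, sumHom] using DFunLike.congr_fun hθ (mk 0 j)

end

variable {p d e : ℕ} {χ : AddChar (ZMod (p ^ d)) (ZMod (p ^ e))}

lemma pow_pow_eq_one_iff (hodd : Odd p) (hχ : ∀ j, (p : ZMod (p ^ e)) ∣ χ j - 1)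
    (g : TwistedProduct χ) (k : ℕ) : g ^ p ^ k = 1 ↔
      (p : ZMod (p ^ e)) ^ k * g.fst = 0 ∧ (p : ZMod (p ^ d)) ^ k * g.snd = 0 := by
  obtain ⟨z, hz⟩ := exists_fst_pow_pow_eq hodd hχ g k
  rw [ext_iff_coord, hz, snd_pow, mul_right_comm, fst_one, snd_one, nsmul_eq_mul, Nat.cast_pow,
    (ZModPrimePow.isUnit_add_natCast_mul isUnit_one z).mul_left_eq_zero]

variable [Fact p.Prime]

lemma orderOf_eq_iff_isUnit_fst (hodd : Odd p) (hχ : ∀ j, (p : ZMod (p ^ e)) ∣ χ j - 1)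
    (hde : d < e) {g : TwistedProduct χ} : orderOf g = p ^ e ↔ IsUnit g.fst := by
  have hp : p.Prime := Fact.out
  obtain ⟨n, rfl⟩ : ∃ n, e = n + 1 := ⟨e - 1, by omega⟩
  have hn : g ^ p ^ n = 1 ↔ ¬ IsUnit g.fst := by
    rw [pow_pow_eq_one_iff hodd hχ, ZMod.natCast_pow_eq_zero_of_le p (by omega : d ≤ n), zero_mul,
      and_iff_left rfl, ← ZModPrimePow.pow_pred_mul_eq_zero_iff_not_isUnit n.succ_pos,
      n.succ_sub_one]
  constructor
  · intro hg
    by_contra hu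
    have := orderOf_dvd_of_pow_eq_one (hn.mpr hu)
    rw [hg, Nat.pow_dvd_pow_iff_le_right hp.one_lt] at this
    omega
  · intro hu
    refine orderOf_eq_prime_pow (mt hn.mp (not_not.mpr hu)) ?_
    rw [pow_pow_eq_one_iff hodd hχ, ZMod.natCast_pow_eq_zero_of_le p le_rfl,
      ZMod.natCast_pow_eq_zero_of_le p hde.le]
    simp

lemma orderOf_eq_of_isUnit_snd (hodd : Odd p) (hχ : ∀ j, (p : ZMod (p ^ e)) ∣ χ j - 1)
    (hd : 0 < d) {g : TwistedProduct χ} (hfst : (p : ZMod (p ^ e)) ^ d * g.fst = 0)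
    (hsnd : IsUnit g.snd) : orderOf g = p ^ d := by
  obtain ⟨n, rfl⟩ : ∃ n, d = n + 1 := ⟨d - 1, by omega⟩
  refine orderOf_eq_prime_pow (fun h => ?_) ?_
  · exact ZModPrimePow.pow_pred_mul_eq_zero_iff_not_isUnit n.succ_pos |>.mp
      ((pow_pow_eq_one_iff hodd hχ g n).mp h).2 hsnd
  · exact (pow_pow_eq_one_iff hodd hχ g _).mpr
      ⟨hfst, by rw [ZMod.natCast_pow_eq_zero_of_le p le_rfl, zero_mul]⟩

lemma isUnit_snd_of_isExactBicyclicPair (hχ : ∀ j, (p : ZMod (p ^ e)) ∣ χ j - 1) (hd : 0 < d)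
    (he : 0 < e) {α β : TwistedProduct χ} {m n : ℕ} (h : IsExactBicyclicPair m n α β)
    (hα : (p : ZMod (p ^ e)) ∣ α.fst) (hβ : IsUnit β.fst) : IsUnit α.snd := by
  by_contra hu
  rw [ZModPrimePow.isUnit_iff_not_dvd hd, not_not] at hu
  let π := ZMod.castHom (dvd_pow_self p he.ne') (ZMod p)
  let σ := ZMod.castHom (dvd_pow_self p hd.ne') (ZMod p)
  have hπχ (j) : π (χ j) = 1 := by
    rw [← sub_eq_zero, ← map_one π, ← map_sub, ZModPrimePow.map_eq_zero_of_natCast_dvd π (hχ j)]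
  have h0 := map_fst_mul_map_eq_zero (σ := (σ : ZMod (p ^ d) →+ ZMod p)) hπχ h
    (ZModPrimePow.map_eq_zero_of_natCast_dvd π hα) (ZModPrimePow.map_eq_zero_of_natCast_dvd σ hu) 1
  exact (hβ.map π).ne_zero (by simpa using h0)

lemma isExactBicyclicPair_iff (hodd : Odd p) (hχ : ∀ j, (p : ZMod (p ^ e)) ∣ χ j - 1)
    (hd : 0 < d) (hde : d < e) {α β : TwistedProduct χ} :
    IsExactBicyclicPair (p ^ d) (p ^ e) α β ↔
      (p : ZMod (p ^ e)) ^ d * α.fst = 0 ∧ IsUnit α.snd ∧ IsUnit β.fst := by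
  constructor
  · intro h
    have hα := ((pow_pow_eq_one_iff hodd hχ α d).mp
      (orderOf_dvd_iff_pow_eq_one.mp h.1.dvd)).1
    have hβ := (orderOf_eq_iff_isUnit_fst hodd hχ hde).mp h.2.1
    exact ⟨hα, isUnit_snd_of_isExactBicyclicPair hχ hd (hd.trans hde) h
      (ZModPrimePow.dvd_of_pow_mul_eq_zero hde hα) hβ, hβ⟩
  · rintro ⟨hα, hα', hβ⟩
    have hαo := orderOf_eq_of_isUnit_snd hodd hχ hd hα hα'
    have hβo := (orderOf_eq_iff_isUnit_fst hodd hχ hde).mpr hβ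
    refine isExactBicyclicPair_of_card hαo hβo ?_ ?_
    · obtain ⟨n, rfl⟩ : ∃ n, e = n + 1 := ⟨e - 1, by omega⟩
      refine disjoint_zpowers_of_orderOf_map (NeZero.ne p) SemidirectProduct.rightHom ?_ hβo ?_
      · rw [hαo]
        exact (orderOf_ofAdd_eq_addOrderOf α.snd).trans (addOrderOf_eq_of_isUnit hα')
      · rw [← map_pow]
        refine congrArg ofAdd (?_ : (β ^ p ^ n).snd = 0)
        rw [snd_pow, nsmul_eq_mul, Nat.cast_pow,
          ZMod.natCast_pow_eq_zero_of_le p (Nat.lt_succ_iff.mp hde), zero_mul]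
    · rw [natCard_eq, Nat.card_zmod, Nat.card_zmod, mul_comm]

lemma card_exactBicyclicPair (hodd : Odd p) (hχ : ∀ j, (p : ZMod (p ^ e)) ∣ χ j - 1)
    (hd : 0 < d) (hde : d < e) :
    Nat.card (ExactBicyclicPair (TwistedProduct χ) (p ^ d) (p ^ e)) =
      p ^ d * (p ^ (d - 1) * (p - 1)) * (p ^ (e - 1) * (p - 1) * p ^ d) := by
  have coordEquiv : {x : TwistedProduct χ × TwistedProduct χ //
    (p : ZMod (p ^ e)) ^ d * x.1.fst = 0 ∧ IsUnit x.1.snd ∧ IsUnit x.2.fst} ≃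
    ({s : ZMod (p ^ e) // (p : ZMod (p ^ e)) ^ d * s = 0} × {r : ZMod (p ^ d) // IsUnit r}) ×
    ({u : ZMod (p ^ e) // IsUnit u} × ZMod (p ^ d)) :=
    { toFun x := ((⟨x.1.1.fst, x.2.1⟩, ⟨x.1.1.snd, x.2.2.1⟩), (⟨x.1.2.fst, x.2.2.2⟩, x.1.2.snd))
      invFun y := ⟨(mk y.1.1 y.1.2, mk y.2.1 y.2.2), y.1.1.2, y.1.2.2, y.2.1.2⟩
      left_inv _ := rfl
      right_inv _ := rfl }
  rw [Nat.card_congr (Equiv.subtypeEquivRight fun x => isExactBicyclicPair_iff hodd hχ hd hde),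
    Nat.card_congr coordEquiv, Nat.card_prod, Nat.card_prod, Nat.card_prod,
    ZModPrimePow.card_pow_torsion, min_eq_left hde.le, ZModPrimePow.card_isUnit hd,
    ZModPrimePow.card_isUnit (hd.trans hde), Nat.card_zmod]

end TwistedProduct

section AddChar

variable {p d e f : ℕ} {χ : AddChar (ZMod (p ^ d)) (ZMod (p ^ e))}

lemma addChar_natCast (hχ : χ 1 = 1 + p ^ f) (k : ℕ) : χ k = (1 + p ^ f) ^ k := by
  rw [← nsmul_one, AddChar.map_nsmul_eq_pow, hχ]

lemma pow_dvd_addChar_sub_one [NeZero p] (hχ : χ 1 = 1 + p ^ f) (j : ZMod (p ^ d)) :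
    (p : ZMod (p ^ e)) ^ f ∣ χ j - 1 := by
  obtain ⟨k, rfl⟩ := ZMod.natCast_zmod_surjective j
  rw [addChar_natCast hχ]
  simpa using sub_one_dvd_pow_sub_one (1 + p ^ f : ZMod (p ^ e)) k

lemma dvd_addChar_sub_one [NeZero p] (hf : 0 < f) (hχ : χ 1 = 1 + p ^ f) (j : ZMod (p ^ d)) :
    (p : ZMod (p ^ e)) ∣ χ j - 1 :=
  (dvd_pow_self _ hf.ne').trans (pow_dvd_addChar_sub_one hχ j)

variable [Fact p.Prime]

lemma exists_addChar_one_eq (hodd : Odd p) (hf : 0 < f) (hfe : f ≤ e) (hedf : e ≤ d + f) :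
    ∃ χ : AddChar (ZMod (p ^ d)) (ZMod (p ^ e)), χ 1 = 1 + p ^ f := by
  have hpow : (1 + p ^ f : ZMod (p ^ e)) ^ p ^ d = 1 := by
    rw [← orderOf_dvd_iff_pow_eq_one, ZModPrimePow.orderOf_one_add_prime_pow hodd hf hfe]
    exact pow_dvd_pow p (by omega)
  exact ⟨AddChar.zmodChar _ hpow, by simpa using AddChar.zmodChar_apply' hpow 1⟩

lemma addChar_eq_one_iff (hodd : Odd p) (hf : 0 < f) (hfe : f ≤ e) (hedf : e ≤ d + f)
    (hχ : χ 1 = 1 + p ^ f) (j : ZMod (p ^ d)) :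
    χ j = 1 ↔ (p : ZMod (p ^ d)) ^ (d + f - e) * j = 0 := by
  obtain ⟨k, rfl⟩ := ZMod.natCast_zmod_surjective j
  rw [addChar_natCast hχ, ← orderOf_dvd_iff_pow_eq_one,
    ZModPrimePow.orderOf_one_add_prime_pow hodd hf hfe, ← Nat.cast_pow, ← Nat.cast_mul,
    ZMod.natCast_eq_zero_iff, ← Nat.mul_dvd_mul_iff_left (pow_pos (NeZero.pos p) (d + f - e)),
    ← pow_add]
  rw [show d + f - e + (e - f) = d by omega]

lemma card_addChar_fiber (hodd : Odd p) (hf : 0 < f) (hfe : f ≤ e) (hedf : e ≤ d + f)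
    (hχ : χ 1 = 1 + p ^ f) {x : ZMod (p ^ e)} (hx : (p : ZMod (p ^ e)) ^ f ∣ x - 1) :
    Nat.card {j // χ j = x} = p ^ (d + f - e) := by
  obtain ⟨k, rfl⟩ := ZModPrimePow.exists_one_add_prime_pow_pow_eq hodd hf hfe hx
  rw [← min_eq_left (by omega : d + f - e ≤ d), ← ZModPrimePow.card_pow_torsion]
  refine Nat.card_congr ((Equiv.subRight (k : ZMod (p ^ d))).subtypeEquiv fun j => ?_)
  have hj : χ j = χ (j - k) * χ k := by rw [← AddChar.map_add_eq_mul, sub_add_cancel]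
  rw [Equiv.subRight_apply, ← addChar_eq_one_iff hodd hf hfe hedf hχ, ← addChar_natCast hχ, hj,
    (χ.val_isUnit _).mul_eq_right]

/-- A multiple of `p` is sent by `χ` to a `p`-th power of a residue `≡ 1` modulo `p ^ f`, hence to
a residue `≡ 1` modulo `p ^ (f + 1)`. -/
lemma isUnit_of_addChar_eq (hodd : Odd p) (hf : 0 < f) (hfe : f < e) (hd : 0 < d)
    (hχ : χ 1 = 1 + p ^ f) {j : ZMod (p ^ d)} {q : ZMod (p ^ e)} (hq : IsUnit q)
    (hj : χ j = 1 + p ^ f * q) : IsUnit j := by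
  rw [ZModPrimePow.isUnit_iff_not_dvd hd]
  rintro ⟨i, rfl⟩
  obtain ⟨w, hw⟩ := pow_dvd_addChar_sub_one hχ i
  obtain ⟨z, hz⟩ := exists_geom_sum_eq_mul_one_add hodd
    (dvd_addChar_sub_one hf hχ i)
  have hχpow : χ (p * i) = 1 + p * (1 + p * z) * (p ^ f * w) := by
    rw [← nsmul_eq_mul, AddChar.map_nsmul_eq_pow, ← hz, ← hw, geom_sum_mul]
    ring
  have h0 : (p : ZMod (p ^ e)) ^ f * (q + p * (-(1 + p * z) * w)) = 0 := by
    linear_combination hχpow - hj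
  exact ZModPrimePow.isUnit_iff_not_dvd (hf.trans hfe) |>.mp
    (ZModPrimePow.isUnit_add_natCast_mul hq _) (ZModPrimePow.dvd_of_pow_mul_eq_zero hfe h0)

end AddChar

namespace TwistedProduct

lemma mul_eq_mul_pow_one_add_iff {A R : Type*} [AddCommGroup A] [CommRing R] {χ : AddChar A R}
    {α β : TwistedProduct χ} (n : ℕ) :
    β * α = α * β ^ (1 + n) ↔
      n • β.snd = 0 ∧
        χ α.snd * (β.fst + χ β.snd * (β ^ n).fst) = β.fst + (χ β.snd - 1) * α.fst := by
  have hsnd : β.snd + α.snd = α.snd + (β.snd + n • β.snd) ↔ n • β.snd = 0 := by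
    rw [add_comm, add_right_inj, left_eq_add]
  rw [ext_iff_coord, fst_mul, fst_mul, snd_mul, snd_mul, pow_add, pow_one, fst_mul, snd_mul,
    snd_pow, hsnd, and_comm]
  refine and_congr_right fun _ => ?_
  constructor <;> intro h <;> linear_combination -h

variable {p d e f : ℕ} [Fact p.Prime] {χ : AddChar (ZMod (p ^ d)) (ZMod (p ^ e))}

lemma exists_isUnit_mul_eq_mul_pow_iff (hodd : Odd p) (hf : 0 < f) (hde : d < e)
    (hχ : χ 1 = 1 + p ^ f) {s u : ZMod (p ^ e)} {t : ZMod (p ^ d)}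
    (hs : (p : ZMod (p ^ e)) ^ d * s = 0) (hu : IsUnit u) (ht : (p : ZMod (p ^ d)) ^ f * t = 0) :
    ∃ q : ZMod (p ^ e), IsUnit q ∧ ∀ r : ZMod (p ^ d),
      (mk u t : TwistedProduct χ) * mk s r = mk s r * mk u t ^ (1 + p ^ f) ↔
        χ r = 1 + p ^ f * q := by
  have hp1 := dvd_addChar_sub_one hf hχ
  obtain ⟨s, rfl⟩ := ZModPrimePow.dvd_of_pow_mul_eq_zero hde hs
  obtain ⟨w, hw⟩ := pow_dvd_addChar_sub_one hχ t
  obtain ⟨z, hz⟩ := exists_fst_pow_pow_eq hodd hp1 (mk u t) f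
  rw [fst_mk] at hz
  obtain ⟨g, rfl⟩ : ∃ g, f = g + 1 := ⟨f - 1, by omega⟩
  set x := (mk u t ^ p ^ (g + 1) : TwistedProduct χ).fst
  have hcoeff : IsUnit (u + χ t * x) := by
    convert ZModPrimePow.isUnit_add_natCast_mul hu (χ t * (p ^ g * (1 + p * z) * u)) using 1
    rw [hz]
    ring
  let q₀ := -(χ t * (1 + p * z) * u) + p * (w * s)
  have hq₀ : IsUnit q₀ := ZModPrimePow.isUnit_add_natCast_mul (((χ.val_isUnit t).mul
    (ZModPrimePow.isUnit_add_natCast_mul isUnit_one z)).mul hu).neg _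
  obtain ⟨y, hy⟩ := hcoeff.exists_right_inv
  have hrhs : u + (χ t - 1) * (p * s) = (u + χ t * x) * (1 + p ^ (g + 1) * (y * q₀)) := by
    linear_combination p * s * hw - χ t * hz - p ^ (g + 1) * q₀ * hy
  refine ⟨y * q₀, (IsUnit.of_mul_eq_one_right _ hy).mul hq₀, fun r => ?_⟩
  rw [mul_eq_mul_pow_one_add_iff, snd_mk, nsmul_eq_mul, Nat.cast_pow, and_iff_right ht, fst_mk,
    snd_mk, fst_mk, hrhs, mul_comm (χ r), hcoeff.mul_right_inj]

lemma card_relation_fiber (hodd : Odd p) (hd : 0 < d) (hf : 0 < f) (hde : d < e) (hfe : f < e)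
    (hedf : e ≤ d + f) (hχ : χ 1 = 1 + p ^ f) {s u : ZMod (p ^ e)} {t : ZMod (p ^ d)}
    (hs : (p : ZMod (p ^ e)) ^ d * s = 0) (hu : IsUnit u) (ht : (p : ZMod (p ^ d)) ^ f * t = 0) :
    Nat.card {r : ZMod (p ^ d) // IsUnit r ∧
      (mk u t : TwistedProduct χ) * mk s r = mk s r * mk u t ^ (1 + p ^ f)} = p ^ (d + f - e) := by
  obtain ⟨q, hq, hrel⟩ := exists_isUnit_mul_eq_mul_pow_iff hodd hf hde hχ hs hu ht
  rw [← card_addChar_fiber hodd hf hfe.le hedf hχ (x := 1 + p ^ f * q) (by simp)]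
  refine Nat.card_congr (Equiv.subtypeEquivRight fun r => ?_)
  rw [hrel, and_iff_right_of_imp (isUnit_of_addChar_eq hodd hf hfe hd hχ hq)]

lemma card_exactBicyclicPair_of_relation (hodd : Odd p) (hd : 0 < d) (hf : 0 < f) (hde : d < e)
    (hfe : f < e) (hedf : e ≤ d + f) (hχ : χ 1 = 1 + p ^ f) :
    Nat.card {x : ExactBicyclicPair (TwistedProduct χ) (p ^ d) (p ^ e) //
      x.1.2 * x.1.1 = x.1.1 * x.1.2 ^ (1 + p ^ f)} =
        p ^ d * (p ^ (e - 1) * (p - 1)) * p ^ min f d * p ^ (d + f - e) := by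
  have hp1 := dvd_addChar_sub_one hf hχ
  have hiff {α β : TwistedProduct χ} :=
    isExactBicyclicPair_iff hodd hp1 hd hde (α := α) (β := β)
  have ht {α β : TwistedProduct χ} (h : β * α = α * β ^ (1 + p ^ f)) :
      (p : ZMod (p ^ d)) ^ f * β.snd = 0 := by
    simpa using ((mul_eq_mul_pow_one_add_iff _).mp h).1
  let Base := ({s : ZMod (p ^ e) // (p : ZMod (p ^ e)) ^ d * s = 0} ×
    {u : ZMod (p ^ e) // IsUnit u}) × {t : ZMod (p ^ d) // (p : ZMod (p ^ d)) ^ f * t = 0}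
  have coordEquiv : {x : ExactBicyclicPair (TwistedProduct χ) (p ^ d) (p ^ e) //
      x.1.2 * x.1.1 = x.1.1 * x.1.2 ^ (1 + p ^ f)} ≃
      Σ b : Base, {r : ZMod (p ^ d) // IsUnit r ∧
        mk b.1.2.1 b.2.1 * mk b.1.1.1 r =
          (mk b.1.1.1 r * mk b.1.2.1 b.2.1 ^ (1 + p ^ f) : TwistedProduct χ)} :=
    { toFun x := ⟨((⟨x.1.1.1.fst, (hiff.mp x.1.2).1⟩, ⟨x.1.1.2.fst, (hiff.mp x.1.2).2.2⟩),
        ⟨x.1.1.2.snd, ht x.2⟩), ⟨x.1.1.1.snd, (hiff.mp x.1.2).2.1, x.2⟩⟩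
      invFun y := ⟨⟨(mk y.1.1.1 y.2, mk y.1.1.2 y.1.2),
        hiff.mpr ⟨y.1.1.1.2, y.2.2.1, y.1.1.2.2⟩⟩, y.2.2.2⟩
      left_inv _ := rfl
      right_inv _ := rfl }
  have : Finite Base := inferInstance
  have := Fintype.ofFinite Base
  have hfiber (b : Base) := card_relation_fiber hodd hd hf hde hfe hedf hχ b.1.1.2 b.1.2.2 b.2.2
  rw [Nat.card_congr coordEquiv, Nat.card_sigma, Finset.sum_congr rfl fun b _ => hfiber b,
    Finset.sum_const, Finset.card_univ, ← Nat.card_eq_fintype_card, smul_eq_mul, Nat.card_prod,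
    Nat.card_prod, ZModPrimePow.card_pow_torsion, ZModPrimePow.card_pow_torsion,
    min_eq_left hde.le, ZModPrimePow.card_isUnit (hd.trans hde)]

end TwistedProduct

namespace M1

open TwistedProduct

variable {p d e f : ℕ} [Fact p.Prime] {χ : AddChar (ZMod (p ^ d)) (ZMod (p ^ e))}

lemma card_quotient_mul_card_relation_twistedProduct (hodd : Odd p) (hd : 0 < d) (hf : 0 < f)
    (hde : d < e) (hχ : χ 1 = 1 + p ^ f) :
    Nat.card (Quotient (bicyclicPairSetoid (M1 p d e f) (p ^ d) (p ^ e))) *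
        Nat.card {x : ExactBicyclicPair (TwistedProduct χ) (p ^ d) (p ^ e) //
          x.1.2 * x.1.1 = x.1.1 * x.1.2 ^ (1 + p ^ f)} =
      Nat.card (ExactBicyclicPair (TwistedProduct χ) (p ^ d) (p ^ e)) := by
  have hp1 := dvd_addChar_sub_one hf hχ
  obtain ⟨ψ, hψa, hψb⟩ := M1.exists_mulEquiv hχ
  have := Finite.of_equiv _ ψ.symm.toEquiv
  have hba : IsExactBicyclicPair (p ^ d) (p ^ e) (M1b p d e f) (M1a p d e f) := by
    rw [← IsExactBicyclicPair.map_iff ψ, hψa, hψb, isExactBicyclicPair_iff hodd hp1 hd hde]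
    simp
  let pairEquiv : ExactBicyclicPair (M1 p d e f) (p ^ d) (p ^ e) ≃
      ExactBicyclicPair (TwistedProduct χ) (p ^ d) (p ^ e) :=
    (ψ.toEquiv.prodCongr ψ.toEquiv).subtypeEquiv fun _ => (IsExactBicyclicPair.map_iff ψ).symm
  rw [← Nat.card_congr pairEquiv, ← card_quotient_mul_card_relation hba]
  congr 1
  refine (Nat.card_congr (pairEquiv.subtypeEquiv fun x => ?_)).symm
  change _ ↔ ψ x.1.2 * ψ x.1.1 = ψ x.1.1 * ψ x.1.2 ^ (1 + p ^ f)
  rw [← map_mul, ← map_pow, ← map_mul, ψ.injective.eq_iff]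

lemma card_quotient_of_lt (hodd : Odd p) (hd : 0 < d) (hf : 0 < f) (hde : d < e) (hfe : f < e)
    (hedf : e ≤ d + f) {k : ℕ} (hk : k + min f d + f + 1 = d + e) :
    Nat.card (Quotient (bicyclicPairSetoid (M1 p d e f) (p ^ d) (p ^ e))) = p ^ k * (p - 1) := by
  have hp : p.Prime := Fact.out
  obtain ⟨χ, hχ⟩ := exists_addChar_one_eq hodd hf hfe.le hedf
  have h := card_quotient_mul_card_relation_twistedProduct hodd hd hf hde hχ
  rw [card_exactBicyclicPair_of_relation hodd hd hf hde hfe hedf hχ, card_exactBicyclicPair hodd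
    (dvd_addChar_sub_one hf hχ) hd hde] at h
  have hexp : p ^ (d - 1) * p ^ d = p ^ k * p ^ min f d * p ^ (d + f - e) := by
    rw [← pow_add, ← pow_add, ← pow_add]
    congr 1
    omega
  have hp1 : 0 < p - 1 := Nat.sub_pos_of_lt hp.one_lt
  have hpos : 0 < p ^ d * (p ^ (e - 1) * (p - 1)) * p ^ min f d * p ^ (d + f - e) := by
    have := hp.pos
    positivity
  refine Nat.eq_of_mul_eq_mul_right hpos (h.trans ?_)
  linear_combination p ^ d * p ^ (e - 1) * (p - 1) * (p - 1) * hexp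

lemma card_quotient_of_eq (hodd : Odd p) (hd : 0 < d) (hde : d < e) :
    Nat.card (Quotient (bicyclicPairSetoid (M1 p d e e) (p ^ d) (p ^ e))) = 1 := by
  have he : 0 < e := hd.trans hde
  obtain ⟨χ, hχ⟩ := exists_addChar_one_eq (p := p) hodd he le_rfl (Nat.le_add_left e d)
  have hχ1 (j) : χ j = 1 := by
    rw [addChar_eq_one_iff hodd he le_rfl (Nat.le_add_left e d) hχ, Nat.add_sub_cancel,
      ZMod.natCast_pow_eq_zero_of_le p le_rfl, zero_mul]
  have hrel (x : ExactBicyclicPair (TwistedProduct χ) (p ^ d) (p ^ e)) :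
      x.1.2 * x.1.1 = x.1.1 * x.1.2 ^ (1 + p ^ e) := by
    rw [pow_add, orderOf_dvd_iff_pow_eq_one.mp x.2.2.1.dvd, mul_one, pow_one]
    simp [ext_iff_coord, hχ1, add_comm]
  have h := card_quotient_mul_card_relation_twistedProduct hodd hd he hde hχ
  rw [Nat.card_congr (Equiv.subtypeUnivEquiv hrel)] at h
  have : Nonempty (ExactBicyclicPair (TwistedProduct χ) (p ^ d) (p ^ e)) :=
    ⟨(mk 0 1, mk 1 0), (isExactBicyclicPair_iff hodd (by simp [hχ1]) hd hde).mpr (by simp)⟩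
  exact Nat.eq_of_mul_eq_mul_right Nat.card_pos (h.trans (one_mul _).symm)

end M1

/-- For `G = M₁(p,d,e,f)` with `d < e`, `f ≤ e ≤ d + f`, the number of
orbits of `Aut(G)` acting componentwise on the exact `(p^d,p^e)`-bicyclic pairs of `G` is:
`1` if `d < f = e`; `p^(e-f-1)(p-1)` if `d ≤ f < e`; and `p^(d+e-2f-1)(p-1)` if `f < d`. -/
theorem stmt_17 (p d e f : ℕ) (hp : p.Prime) (hodd : Odd p)
    (hd : 0 < d) (hf : 0 < f) (hde : d < e) (hfe : f ≤ e) (hedf : e ≤ d + f) :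
    (d < f ∧ f = e →
      Nat.card (Quotient (bicyclicPairSetoid (M1 p d e f) (p ^ d) (p ^ e))) = 1) ∧
    (d ≤ f ∧ f < e →
      Nat.card (Quotient (bicyclicPairSetoid (M1 p d e f) (p ^ d) (p ^ e))) =
        p ^ (e - f - 1) * (p - 1)) ∧
    (f < d →
      Nat.card (Quotient (bicyclicPairSetoid (M1 p d e f) (p ^ d) (p ^ e))) =
        p ^ (d + e - 2 * f - 1) * (p - 1)) := by
  have := Fact.mk hp
  refine ⟨?_, ?_, ?_⟩
  · rintro ⟨-, rfl⟩
    exact M1.card_quotient_of_eq hodd hd hde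
  · rintro ⟨hdf, hfe⟩
    exact M1.card_quotient_of_lt hodd hd hf hde hfe hedf (by omega)
  · intro hfd
    exact M1.card_quotient_of_lt hodd hd hf hde (hfd.trans hde) hedf (by omega)
end

section
/- Let p be an odd prime and let d, e, f be positive integers with 1 ≤ f < d < e, and let G = M₂(p,d,e,f). Consider the action of the automorphism group Aut(G) on the set of exact (p^d, p^e)-bicyclic pairs of G given by φ·(α, β) = (φ(α), φ(β)). Then the number of orbits of this action equals p^{2d−2f−1}(p−1). -/
/-!
An automorphism that fixes both members of an exact bicyclic pair is trivial, because the pair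
generates the group. So `Aut(G)` acts freely, and the number of orbits is the number of exact pairs
divided by `|Aut(G)|`. Since `G = M₂(p,d,e,f)` is given by a presentation, its automorphisms
correspond to the exact pairs `(α, β)` that satisfy the remaining relation `β⁻¹αβ = α^(1+p^f)`.

Both kinds of pairs are counted in coordinates `α = (α₁, α₂)`, `β = (β₁, β₂)` on
`G ≃ ℤ/p^d ⋊ ℤ/p^e`. The units `u` by which `ℤ/p^e` acts are `1` modulo `p`, so by lifting the
exponent `1 + u + ⋯ + u^(k-1)` is divisible by the same powers of `p` as `k`. Therefore `(α, β)`
is exact iff `α₁` and `β₂` are units and `p^(e-d) ∣ α₂`; it satisfies the relation as well iff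
`α₁` is a unit, `p^(e-f) ∣ α₂` and `β₂ ≡ 1` modulo `p^(d-f)`.
-/

open Multiplicative (ofAdd toAdd)

section ZModDivisibility

theorem natCast_dvd_intCast_zmod_iff {m n : ℕ} (h : m ∣ n) (z : ℤ) :
    (m : ZMod n) ∣ (z : ZMod n) ↔ (m : ℤ) ∣ z := by
  refine ⟨fun ⟨x, hx⟩ => ?_, fun hz => by exact_mod_cast Int.cast_dvd_cast _ _ hz⟩
  obtain ⟨w, rfl⟩ := ZMod.intCast_surjective x
  have hn : (n : ℤ) ∣ z - m * w := by
    rw [← ZMod.intCast_zmod_eq_zero_iff_dvd]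
    simp [hx]
  exact (dvd_sub_left (dvd_mul_right _ _)).1 ((Int.natCast_dvd_natCast.2 h).trans hn)

theorem ncard_setOf_natCast_dvd_zmod {m n : ℕ} [NeZero n] (h : m ∣ n) :
    {x : ZMod n | (m : ZMod n) ∣ x}.ncard = n / m := by
  have hker : {x : ZMod n | (m : ZMod n) ∣ x} = AddSubgroup.zmultiples (m : ZMod n) := by
    ext x
    rw [Set.mem_ofPred_eq, SetLike.mem_coe, AddSubgroup.mem_zmultiples_iff]
    constructor
    · rintro ⟨y, rfl⟩
      obtain ⟨k, rfl⟩ := ZMod.intCast_surjective y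
      exact ⟨k, by rw [zsmul_eq_mul, mul_comm]⟩
    · rintro ⟨k, rfl⟩
      exact ⟨k, by rw [zsmul_eq_mul, mul_comm]⟩
  rw [hker, ← Nat.card_coe_set_eq]
  exact (Nat.card_zmultiples _).trans
    ((ZMod.addOrderOf_coe m (NeZero.ne n)).trans (by rw [Nat.gcd_eq_right h]))

theorem ncard_setOf_isUnit_zmod (n : ℕ) [NeZero n] : {x : ZMod n | IsUnit x}.ncard = n.totient := by
  rw [← ZMod.card_units_eq_totient, ← Nat.card_eq_fintype_card,
    ← Nat.card_range_of_injective (Units.val_injective (α := ZMod n))]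
  rfl

variable {p n c : ℕ}

theorem natCast_pow_dvd_intCast_zmod_iff (h : c ≤ n) (z : ℤ) :
    (p : ZMod (p ^ n)) ^ c ∣ z ↔ (p : ℤ) ^ c ∣ z := by
  exact_mod_cast natCast_dvd_intCast_zmod_iff (pow_dvd_pow p h) z

theorem natCast_pow_dvd_natCast_zmod_iff (h : c ≤ n) (k : ℕ) :
    (p : ZMod (p ^ n)) ^ c ∣ k ↔ p ^ c ∣ k := by
  exact_mod_cast natCast_pow_dvd_intCast_zmod_iff h (k : ℤ)

theorem natCast_pow_mul_eq_zero_zmod_iff [NeZero p] (h : c ≤ n) (x : ZMod (p ^ n)) :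
    (p : ZMod (p ^ n)) ^ c * x = 0 ↔ (p : ZMod (p ^ n)) ^ (n - c) ∣ x := by
  obtain ⟨k, rfl⟩ := ZMod.natCast_zmod_surjective x
  rw [natCast_pow_dvd_natCast_zmod_iff (n.sub_le c), ← Nat.cast_pow, ← Nat.cast_mul,
    ZMod.natCast_eq_zero_iff, ← pow_mul_pow_sub p h,
    Nat.mul_dvd_mul_iff_left (pow_pos (NeZero.pos p) c)]

theorem ncard_setOf_natCast_pow_dvd_zmod [NeZero p] (h : c ≤ n) :
    {x : ZMod (p ^ n) | (p : ZMod (p ^ n)) ^ c ∣ x}.ncard = p ^ (n - c) := by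
  rw [← Nat.pow_div h (NeZero.pos p), ← ncard_setOf_natCast_dvd_zmod (pow_dvd_pow p h),
    Nat.cast_pow]

theorem isUnit_zmod_prime_pow_iff (hp : p.Prime) (hn : 0 < n) (x : ZMod (p ^ n)) :
    IsUnit x ↔ ¬(p : ZMod (p ^ n)) ∣ x := by
  have : NeZero p := ⟨hp.ne_zero⟩
  obtain ⟨k, rfl⟩ := ZMod.natCast_zmod_surjective x
  rw [ZMod.isUnit_natCast_iff_not_dvd_pow hp hn, ← pow_one (p : ZMod (p ^ n)),
    natCast_pow_dvd_natCast_zmod_iff hn, pow_one]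

theorem prime_not_dvd_one_zmod_prime_pow (hp : p.Prime) (hn : 0 < n) :
    ¬(p : ZMod (p ^ n)) ∣ 1 :=
  (isUnit_zmod_prime_pow_iff hp hn 1).1 isUnit_one

end ZModDivisibility

section LiftingTheExponent

variable {p : ℕ}

theorem prime_pow_dvd_geom_sum_int_iff (hp : p.Prime) (hodd : Odd p) {z : ℤ} (hz : (p : ℤ) ∣ z - 1)
    (c k : ℕ) :
    (p : ℤ) ^ c ∣ ∑ i ∈ Finset.range k, z ^ i ↔ p ^ c ∣ k := by
  have hp' : Prime (p : ℤ) := Nat.prime_iff_prime_int.1 hp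
  rcases eq_or_ne z 1 with rfl | hz1
  · simp only [one_pow, Finset.sum_const, Finset.card_range, nsmul_eq_mul, mul_one]
    exact_mod_cast Iff.rfl
  have hpz : ¬(p : ℤ) ∣ z := fun h =>
    hp'.not_isUnit (isUnit_of_dvd_one (by simpa using dvd_sub h hz))
  have hlte := Int.emultiplicity_pow_sub_pow hp hodd hz hpz k
  rw [one_pow, ← geom_sum_mul, emultiplicity_mul hp', add_comm] at hlte
  have hfin : FiniteMultiplicity (p : ℤ) (z - 1) :=
    Int.finiteMultiplicity_iff.2 ⟨by simpa using hp.ne_one, sub_ne_zero.2 hz1⟩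
  have hmult := ENat.add_right_injective_of_ne_top
    (finiteMultiplicity_iff_emultiplicity_ne_top.1 hfin) hlte
  rw [pow_dvd_iff_le_emultiplicity, hmult, ← pow_dvd_iff_le_emultiplicity]

theorem prime_pow_dvd_geom_sum_zmod_iff (hp : p.Prime) (hodd : Odd p) {n c : ℕ} (hc : c ≤ n)
    {u : ZMod (p ^ n)} (hu : (p : ZMod (p ^ n)) ∣ u - 1) (k : ℕ) :
    (p : ZMod (p ^ n)) ^ c ∣ ∑ i ∈ Finset.range k, u ^ i ↔ p ^ c ∣ k := by
  rcases c.eq_zero_or_pos with rfl | hc0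
  · simp
  obtain ⟨z, rfl⟩ := ZMod.intCast_surjective u
  have hz : (p : ℤ) ∣ z - 1 := by
    rw [← natCast_dvd_intCast_zmod_iff (dvd_pow_self p (hc0.trans_le hc).ne')]
    exact_mod_cast hu
  rw [← prime_pow_dvd_geom_sum_int_iff hp hodd hz, ← natCast_pow_dvd_intCast_zmod_iff hc]
  push_cast
  rfl

theorem orderOf_one_add_prime_pow_zmod (hp : p.Prime) (hodd : Odd p) {d f : ℕ}
    (hf : 0 < f) (hfd : f ≤ d) :
    orderOf (1 + (p : ZMod (p ^ d)) ^ f) = p ^ (d - f) := by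
  obtain ⟨n, rfl⟩ := Nat.exists_eq_add_of_le' hfd
  have hp3 : 3 ≤ p := hp.two_le.lt_of_ne' (by rintro rfl; exact absurd hodd (by decide))
  have h := ZMod.orderOf_one_add_mul_prime_pow hp f hf.ne' (by nlinarith) 1
    (Nat.prime_iff_prime_int.1 hp).not_dvd_one n
  rw [Int.cast_one, mul_one] at h
  rw [h, Nat.add_sub_cancel]

end LiftingTheExponent

theorem exists_monoidHom_ofAdd_one {n : ℕ} {G : Type*} [Group G] {u : G} (hu : u ^ n = 1) :
    ∃ ψ : Multiplicative (ZMod n) →* G, ψ (ofAdd 1) = u := by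
  refine ⟨AddMonoidHom.toMultiplicativeLeft
    (ZMod.lift n ⟨zmultiplesHom (Additive G) (Additive.ofMul u), ?_⟩), ?_⟩
  · simp [← ofMul_pow, hu]
  · exact (congrArg Additive.toMul ((congrArg _ Int.cast_one.symm).trans
      (ZMod.lift_coe n _ 1))).trans (by simp)

section BicyclicPairs

variable {G H : Type*} [Group G] [Group H] {m n : ℕ} {α β : G}

theorem IsExactBicyclicPair.map_s18 (h : IsExactBicyclicPair m n α β) (θ : G ≃* H) :
    IsExactBicyclicPair m n (θ α) (θ β) := by
  obtain ⟨hα, hβ, hinf, hmul⟩ := h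
  refine ⟨(θ.orderOf_eq α).trans hα, (θ.orderOf_eq β).trans hβ, ?_, fun g => ?_⟩
  · rw [← MonoidHom.coe_coe θ, ← MonoidHom.map_zpowers, ← MonoidHom.map_zpowers,
      ← Subgroup.map_inf _ _ _ θ.injective, hinf, Subgroup.map_bot]
  · obtain ⟨i, j, hij⟩ := hmul (θ.symm g)
    exact ⟨i, j, by rw [← map_zpow, ← map_zpow, ← map_mul, ← hij, θ.apply_symm_apply]⟩

theorem isExactBicyclicPair_map_iff (θ : G ≃* H) :
    IsExactBicyclicPair m n (θ α) (θ β) ↔ IsExactBicyclicPair m n α β :=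
  ⟨fun h => by simpa using h.map_s18 θ.symm, fun h => h.map_s18 θ⟩

theorem IsExactBicyclicPair.hom_ext_s18 (h : IsExactBicyclicPair m n α β) {φ φ' : G →* H}
    (hα : φ α = φ' α) (hβ : φ β = φ' β) : φ = φ' := by
  ext g
  obtain ⟨i, j, rfl⟩ := h.2.2.2 g
  simp only [map_mul, map_zpow, hα, hβ]

theorem IsExactBicyclicPair.exists_eq_pow_mul_pow [NeZero m] [NeZero n]
    (h : IsExactBicyclicPair m n α β) (g : G) : ∃ i j : ℕ, g = α ^ i * β ^ j := by
  obtain ⟨hα, hβ, -, hmul⟩ := h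
  have hpow {x : G} (hx : 0 < orderOf x) (i : ℤ) : ∃ k : ℕ, x ^ k = x ^ i :=
    (orderOf_pos_iff.1 hx).mem_powers_iff_mem_zpowers.2 ⟨i, rfl⟩
  obtain ⟨i, j, rfl⟩ := hmul g
  obtain ⟨k, hk⟩ := hpow (hα ▸ NeZero.pos m) i
  obtain ⟨l, hl⟩ := hpow (hβ ▸ NeZero.pos n) j
  exact ⟨k, l, by rw [hk, hl]⟩

theorem IsExactBicyclicPair.of_disjoint [Finite G] (hα : orderOf α = m) (hβ : orderOf β = n)
    (hdisj : Disjoint (Subgroup.zpowers α) (Subgroup.zpowers β)) (hcard : Nat.card G = m * n) :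
    IsExactBicyclicPair m n α β := by
  refine ⟨hα, hβ, hdisj.eq_bot, fun g => ?_⟩
  have hcompl : Subgroup.IsComplement' (Subgroup.zpowers α) (Subgroup.zpowers β) :=
    Subgroup.isComplement'_of_card_mul_and_disjoint
      (by rw [Nat.card_zpowers, Nat.card_zpowers, hα, hβ, hcard]) hdisj
  obtain ⟨⟨⟨_, i, rfl⟩, ⟨_, j, rfl⟩⟩, hij⟩ := hcompl.2 g
  exact ⟨i, j, hij.symm⟩

instance : MulAction (MulAut G) {x : G × G // IsExactBicyclicPair m n x.1 x.2} where
  smul φ x := ⟨(φ x.1.1, φ x.1.2), x.2.map_s18 φ⟩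
  one_smul _ := rfl
  mul_smul _ _ _ := rfl

theorem bicyclicPairSetoid_eq_orbitRel :
    bicyclicPairSetoid G m n =
      MulAction.orbitRel (MulAut G) {x : G × G // IsExactBicyclicPair m n x.1 x.2} := by
  refine Setoid.ext fun x y => (bicyclicPairSetoid G m n).comm'.trans ?_
  exact exists_congr fun φ => by rw [Subtype.ext_iff, Prod.ext_iff]; rfl

theorem stabilizer_isExactBicyclicPair_eq_bot
    (x : {x : G × G // IsExactBicyclicPair m n x.1 x.2}) :
    MulAction.stabilizer (MulAut G) x = ⊥ := by
  refine (Subgroup.eq_bot_iff_forall _).2 fun φ hφ => MulEquiv.toMonoidHom_injective ?_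
  have h : (φ x.1.1, φ x.1.2) = x.1 := congrArg Subtype.val hφ
  exact x.2.hom_ext_s18 (congrArg Prod.fst h) (congrArg Prod.snd h)

theorem card_isExactBicyclicPair (G : Type*) [Group G] (m n : ℕ) :
    Nat.card {x : G × G // IsExactBicyclicPair m n x.1 x.2} =
      Nat.card (Quotient (bicyclicPairSetoid G m n)) * Nat.card (MulAut G) := by
  rw [Nat.card_congr (MulAction.selfEquivOrbitsQuotientProd
    stabilizer_isExactBicyclicPair_eq_bot), Nat.card_prod, bicyclicPairSetoid_eq_orbitRel]

end BicyclicPairs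

/-- The action of the units of a ring on its additive group by multiplication, with the additive
group written multiplicatively so that it can be the kernel of a semidirect product. -/
def unitsMulAut (R : Type*) [Ring R] : Rˣ →* MulAut (Multiplicative R) :=
  (MulAutMultiplicative R).symm.toMonoidHom.comp (DistribMulAction.toAddAut Rˣ R)

/-- The semidirect product of the additive groups of a ring `R` and of `S`, where `y : S` acts on
`R` as multiplication by the unit `ψ y`. The group `M₂(p,d,e,f)` is of this form with `R = ℤ/p^d`
and `S = ℤ/p^e`. -/
abbrev UnitSemidirect {R S : Type*} [Ring R] [AddGroup S] (ψ : Multiplicative S →* Rˣ) : Type _ :=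
  Multiplicative R ⋊[(unitsMulAut R).comp ψ] Multiplicative S

namespace UnitSemidirect

section Coordinates

variable {R S : Type*} [Ring R] [AddGroup S] {ψ : Multiplicative S →* Rˣ}

/-- The coordinate of an element in the kernel `R`, written additively. -/
def fst (g : UnitSemidirect ψ) : R := g.left.toAdd

/-- The coordinate of an element in the acting group `S`, written additively. -/
def snd (g : UnitSemidirect ψ) : S := g.right.toAdd

/-- The coordinates `(fst g, snd g)` of an element, as a bijection used for counting. -/
def equivProd : UnitSemidirect ψ ≃ R × S :=
  SemidirectProduct.equivProd.trans (Multiplicative.toAdd.prodCongr Multiplicative.toAdd)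

theorem ext_iff {g h : UnitSemidirect ψ} : g = h ↔ g.fst = h.fst ∧ g.snd = h.snd :=
  SemidirectProduct.ext_iff

@[simp] theorem fst_one : (1 : UnitSemidirect ψ).fst = 0 := rfl

@[simp] theorem snd_one : (1 : UnitSemidirect ψ).snd = 0 := rfl

theorem fst_mul (g h : UnitSemidirect ψ) : (g * h).fst = g.fst + ψ (ofAdd g.snd) * h.fst := rfl

theorem snd_mul (g h : UnitSemidirect ψ) : (g * h).snd = g.snd + h.snd := rfl

theorem snd_pow (g : UnitSemidirect ψ) (k : ℕ) : (g ^ k).snd = k • g.snd :=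
  congrArg toAdd (map_pow SemidirectProduct.rightHom g k)

theorem fst_pow (g : UnitSemidirect ψ) (k : ℕ) :
    (g ^ k).fst = (∑ i ∈ Finset.range k, (ψ (ofAdd g.snd) : R) ^ i) * g.fst := by
  induction k with
  | zero => simp
  | succ k ih => rw [pow_succ', fst_mul, ih, geom_sum_succ, add_mul, one_mul, mul_assoc, add_comm]

theorem inr_inv_mul_inl_mul_inr (x : R) (y : S) :
    (SemidirectProduct.inr (ofAdd y))⁻¹ * SemidirectProduct.inl (ofAdd x) *
        SemidirectProduct.inr (ofAdd y) =
      (SemidirectProduct.inl (ofAdd (ψ (ofAdd (-y)) * x)) : UnitSemidirect ψ) := by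
  rw [← map_inv, ← SemidirectProduct.inl_aut_inv, ← map_inv]
  rfl

end Coordinates

section PrimePower

variable {p d e c : ℕ} {ψ : Multiplicative (ZMod (p ^ e)) →* (ZMod (p ^ d))ˣ}
  {α β : UnitSemidirect ψ}

theorem prime_pow_dvd_fst_pow (hp : p.Prime) (hodd : Odd p)
    (hψ : ∀ y, (p : ZMod (p ^ d)) ∣ ψ y - 1) (x : UnitSemidirect ψ) (hc : c ≤ d) {k : ℕ}
    (hk : p ^ c ∣ k) : (p : ZMod (p ^ d)) ^ c ∣ (x ^ k).fst := by
  rw [fst_pow]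
  exact ((prime_pow_dvd_geom_sum_zmod_iff hp hodd hc (hψ _) k).2 hk).mul_right _

theorem prime_pow_dvd_fst_pow_iff (hp : p.Prime) (hodd : Odd p)
    (hψ : ∀ y, (p : ZMod (p ^ d)) ∣ ψ y - 1) (hα : IsUnit α.fst) (hc : c ≤ d) {k : ℕ} :
    (p : ZMod (p ^ d)) ^ c ∣ (α ^ k).fst ↔ p ^ c ∣ k := by
  rw [fst_pow, hα.dvd_mul_right, prime_pow_dvd_geom_sum_zmod_iff hp hodd hc (hψ _)]

theorem pow_dvd_snd_pow_iff (hβ : IsUnit β.snd) (hc : c ≤ e) {k : ℕ} :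
    (p : ZMod (p ^ e)) ^ c ∣ (β ^ k).snd ↔ p ^ c ∣ k := by
  rw [snd_pow, nsmul_eq_mul, hβ.dvd_mul_right, natCast_pow_dvd_natCast_zmod_iff hc]

theorem eq_one_iff_pow_dvd {x : UnitSemidirect ψ} :
    x = 1 ↔ (p : ZMod (p ^ d)) ^ d ∣ x.fst ∧ (p : ZMod (p ^ e)) ^ e ∣ x.snd := by
  have hzero (n : ℕ) : (p : ZMod (p ^ n)) ^ n = 0 := by exact_mod_cast ZMod.natCast_self (p ^ n)
  rw [ext_iff, fst_one, snd_one, hzero, hzero, zero_dvd_iff, zero_dvd_iff]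

theorem snd_pow_pow_eq_zero_iff [NeZero p] (hc : c ≤ e) (x : UnitSemidirect ψ) :
    (x ^ p ^ c).snd = 0 ↔ (p : ZMod (p ^ e)) ^ (e - c) ∣ x.snd := by
  rw [snd_pow, nsmul_eq_mul, Nat.cast_pow, natCast_pow_mul_eq_zero_zmod_iff hc]

theorem orderOf_of_isUnit_fst (hp : p.Prime) (hodd : Odd p)
    (hψ : ∀ y, (p : ZMod (p ^ d)) ∣ ψ y - 1) (hde : d ≤ e) (hα : IsUnit α.fst)
    (hα' : (p : ZMod (p ^ e)) ^ (e - d) ∣ α.snd) : orderOf α = p ^ d := by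
  have : NeZero p := ⟨hp.ne_zero⟩
  refine Nat.dvd_antisymm (orderOf_dvd_of_pow_eq_one (eq_one_iff_pow_dvd.2 ⟨?_, ?_⟩)) ?_
  · exact prime_pow_dvd_fst_pow hp hodd hψ α le_rfl dvd_rfl
  · rw [(snd_pow_pow_eq_zero_iff hde α).2 hα']
    exact dvd_zero _
  · rw [← prime_pow_dvd_fst_pow_iff hp hodd hψ hα le_rfl, pow_orderOf_eq_one, fst_one]
    exact dvd_zero _

theorem orderOf_of_isUnit_snd (hp : p.Prime) (hodd : Odd p)
    (hψ : ∀ y, (p : ZMod (p ^ d)) ∣ ψ y - 1) (hde : d ≤ e) (hβ : IsUnit β.snd) :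
    orderOf β = p ^ e := by
  refine Nat.dvd_antisymm (orderOf_dvd_of_pow_eq_one (eq_one_iff_pow_dvd.2 ⟨?_, ?_⟩)) ?_
  · exact prime_pow_dvd_fst_pow hp hodd hψ β le_rfl (pow_dvd_pow p hde)
  · exact (pow_dvd_snd_pow_iff hβ le_rfl).2 dvd_rfl
  · rw [← pow_dvd_snd_pow_iff hβ le_rfl, pow_orderOf_eq_one, snd_one]
    exact dvd_zero _

/-- If `α ^ s = β ^ t`, the second coordinate shows that `t` is divisible by one more power of `p`
than `s`, and the first coordinate that `s` is divisible by every power of `p` that divides `t`. -/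
theorem prime_pow_dvd_of_pow_eq_pow (hp : p.Prime) (hodd : Odd p)
    (hψ : ∀ y, (p : ZMod (p ^ d)) ∣ ψ y - 1) (hde : d ≤ e) (hα : IsUnit α.fst)
    (hα' : (p : ZMod (p ^ e)) ∣ α.snd) (hβ : IsUnit β.snd) {s t : ℕ} (hst : α ^ s = β ^ t) :
    p ^ d ∣ s := by
  suffices h : ∀ c ≤ d, p ^ c ∣ s from h d le_rfl
  intro c
  induction c with
  | zero => simp
  | succ c ih =>
    intro hc
    have ht : p ^ (c + 1) ∣ t := by
      rw [← pow_dvd_snd_pow_iff hβ (hc.trans hde), ← hst, snd_pow, nsmul_eq_mul, pow_succ]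
      exact mul_dvd_mul (by exact_mod_cast Nat.cast_dvd_cast (ih (Nat.le_of_succ_le hc))) hα'
    rw [← prime_pow_dvd_fst_pow_iff hp hodd hψ hα hc, hst]
    exact prime_pow_dvd_fst_pow hp hodd hψ β hc ht

theorem isExactBicyclicPair_of_isUnit (hp : p.Prime) (hodd : Odd p)
    (hψ : ∀ y, (p : ZMod (p ^ d)) ∣ ψ y - 1) (hde : d < e) (hα : IsUnit α.fst)
    (hα' : (p : ZMod (p ^ e)) ^ (e - d) ∣ α.snd) (hβ : IsUnit β.snd) :
    IsExactBicyclicPair (p ^ d) (p ^ e) α β := by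
  have : NeZero p := ⟨hp.ne_zero⟩
  have : Finite (UnitSemidirect ψ) := Finite.of_equiv _ equivProd.symm
  have hpα : (p : ZMod (p ^ e)) ∣ α.snd := (dvd_pow_self _ (Nat.sub_ne_zero_of_lt hde)).trans hα'
  have hord : orderOf α = p ^ d := orderOf_of_isUnit_fst hp hodd hψ hde.le hα hα'
  refine .of_disjoint hord (orderOf_of_isUnit_snd hp hodd hψ hde.le hβ) ?_ ?_
  · refine Subgroup.disjoint_def.2 fun hxα hxβ => ?_
    obtain ⟨s, rfl⟩ := mem_powers_iff_mem_zpowers.2 hxα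
    obtain ⟨t, ht⟩ := mem_powers_iff_mem_zpowers.2 hxβ
    rw [← orderOf_dvd_iff_pow_eq_one, hord]
    exact prime_pow_dvd_of_pow_eq_pow hp hodd hψ hde.le hα hpα hβ ht.symm
  · rw [Nat.card_congr equivProd, Nat.card_prod, Nat.card_zmod, Nat.card_zmod]

theorem pow_dvd_snd_of_isExactBicyclicPair [NeZero p] (hde : d ≤ e)
    (h : IsExactBicyclicPair (p ^ d) (p ^ e) α β) : (p : ZMod (p ^ e)) ^ (e - d) ∣ α.snd := by
  rw [← snd_pow_pow_eq_zero_iff hde, orderOf_dvd_iff_pow_eq_one.1 h.1.dvd, snd_one]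

theorem isUnit_snd_of_isExactBicyclicPair (hp : p.Prime) (he : 0 < e)
    (hα : (p : ZMod (p ^ e)) ∣ α.snd) (h : IsExactBicyclicPair (p ^ d) (p ^ e) α β) :
    IsUnit β.snd := by
  have : NeZero p := ⟨hp.ne_zero⟩
  refine (isUnit_zmod_prime_pow_iff hp he _).2 fun hβ => ?_
  obtain ⟨i, j, hij⟩ := h.exists_eq_pow_mul_pow (equivProd.symm (0, 1))
  have h1 : (1 : ZMod (p ^ e)) = i • α.snd + j • β.snd := by
    rw [← snd_pow, ← snd_pow, ← snd_mul, ← hij]; rfl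
  refine prime_not_dvd_one_zmod_prime_pow hp he ?_
  rw [h1]
  exact dvd_add (dvd_smul_of_dvd i hα) (dvd_smul_of_dvd j hβ)

theorem isUnit_fst_of_isExactBicyclicPair (hp : p.Prime) (hodd : Odd p)
    (hψ : ∀ y, (p : ZMod (p ^ d)) ∣ ψ y - 1) (hd : 0 < d) (he : 0 < e)
    (hα : (p : ZMod (p ^ e)) ∣ α.snd) (h : IsExactBicyclicPair (p ^ d) (p ^ e) α β) :
    IsUnit α.fst := by
  have : NeZero p := ⟨hp.ne_zero⟩
  have hβ := isUnit_snd_of_isExactBicyclicPair hp he hα h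
  refine (isUnit_zmod_prime_pow_iff hp hd _).2 fun hα1 => ?_
  obtain ⟨i, j, hij⟩ := h.exists_eq_pow_mul_pow (equivProd.symm (1, 0))
  have hj : p ^ 1 ∣ j := by
    rw [← pow_dvd_snd_pow_iff hβ he, pow_one]
    have h0 : (0 : ZMod (p ^ e)) = i • α.snd + (β ^ j).snd := by
      rw [← snd_pow, ← snd_mul, ← hij]; rfl
    exact (dvd_add_right (dvd_smul_of_dvd i hα)).1 (h0 ▸ dvd_zero _)
  have h1 : (1 : ZMod (p ^ d)) = (α ^ i).fst + ψ (ofAdd (α ^ i).snd) * (β ^ j).fst := by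
    rw [← fst_mul, ← hij]; rfl
  refine prime_not_dvd_one_zmod_prime_pow hp hd ?_
  have hβj : (p : ZMod (p ^ d)) ∣ (β ^ j).fst := by
    simpa only [pow_one] using prime_pow_dvd_fst_pow hp hodd hψ β hd hj
  rw [h1, fst_pow]
  exact dvd_add (hα1.mul_left _) (hβj.mul_left _)

theorem isExactBicyclicPair_iff (hp : p.Prime) (hodd : Odd p)
    (hψ : ∀ y, (p : ZMod (p ^ d)) ∣ ψ y - 1) (hd : 0 < d) (hde : d < e) :
    IsExactBicyclicPair (p ^ d) (p ^ e) α β ↔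
      IsUnit α.fst ∧ (p : ZMod (p ^ e)) ^ (e - d) ∣ α.snd ∧ IsUnit β.snd := by
  have : NeZero p := ⟨hp.ne_zero⟩
  refine ⟨fun h => ?_, fun h => isExactBicyclicPair_of_isUnit hp hodd hψ hde h.1 h.2.1 h.2.2⟩
  have hα := pow_dvd_snd_of_isExactBicyclicPair hde.le h
  have hpα := (dvd_pow_self _ (Nat.sub_ne_zero_of_lt hde)).trans hα
  exact ⟨isUnit_fst_of_isExactBicyclicPair hp hodd hψ hd (hd.trans hde) hpα h, hα,
    isUnit_snd_of_isExactBicyclicPair hp (hd.trans hde) hpα h⟩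

end PrimePower

section Relation

variable {p d e f : ℕ} {ψ : Multiplicative (ZMod (p ^ e)) →* (ZMod (p ^ d))ˣ}
  {α β : UnitSemidirect ψ}

theorem exists_val_map_ofAdd_neg_one_eq (hp : p.Prime) (hodd : Odd p) (hf : 0 < f) (hfd : f ≤ d)
    (hde : d ≤ e) :
    ∃ ψ : Multiplicative (ZMod (p ^ e)) →* (ZMod (p ^ d))ˣ,
      (ψ (ofAdd (-1)) : ZMod (p ^ d)) = 1 + (p : ZMod (p ^ d)) ^ f := by
  have hu : (1 + (p : ZMod (p ^ d)) ^ f) ^ p ^ e = 1 := by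
    rw [← orderOf_dvd_iff_pow_eq_one, orderOf_one_add_prime_pow_zmod hp hodd hf hfd]
    exact pow_dvd_pow p ((d.sub_le f).trans hde)
  have hu' : (Units.ofPowEqOne _ _ hu (pow_ne_zero e hp.ne_zero))⁻¹ ^ p ^ e = 1 := by
    rw [inv_pow, Units.pow_ofPowEqOne, inv_one]
  obtain ⟨ψ, hψ⟩ := exists_monoidHom_ofAdd_one hu'
  exact ⟨ψ, by rw [ofAdd_neg, map_inv, hψ, inv_inv, Units.val_ofPowEqOne]⟩

theorem val_map_ofAdd_neg_natCast {x : ZMod (p ^ d)} (hψ : (ψ (ofAdd (-1)) : ZMod (p ^ d)) = x)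
    (k : ℕ) : (ψ (ofAdd (-k : ZMod (p ^ e))) : ZMod (p ^ d)) = x ^ k := by
  rw [← hψ, ← Units.val_pow_eq_pow_val, ← map_pow, ← ofAdd_nsmul, nsmul_eq_mul, mul_neg_one]

theorem dvd_val_map_sub_one [NeZero p] (hf : 0 < f)
    (hψ : (ψ (ofAdd (-1)) : ZMod (p ^ d)) = 1 + (p : ZMod (p ^ d)) ^ f)
    (y : Multiplicative (ZMod (p ^ e))) : (p : ZMod (p ^ d)) ∣ ψ y - 1 := by
  obtain ⟨k, hk⟩ := ZMod.natCast_zmod_surjective (-y.toAdd)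
  rw [← ofAdd_toAdd y, ← neg_neg y.toAdd, ← hk, val_map_ofAdd_neg_natCast hψ]
  refine Dvd.dvd.trans ?_ (sub_one_dvd_pow_sub_one _ k)
  rw [add_sub_cancel_left]
  exact dvd_pow_self _ hf.ne'

theorem map_ofAdd_eq_one_iff (hp : p.Prime) (hodd : Odd p) (hf : 0 < f) (hfd : f ≤ d) (hde : d ≤ e)
    (hψ : (ψ (ofAdd (-1)) : ZMod (p ^ d)) = 1 + (p : ZMod (p ^ d)) ^ f) (y : ZMod (p ^ e)) :
    ψ (ofAdd y) = 1 ↔ (p : ZMod (p ^ e)) ^ (d - f) ∣ y := by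
  have : NeZero p := ⟨hp.ne_zero⟩
  obtain ⟨k, hk⟩ := ZMod.natCast_zmod_surjective (-y)
  rw [← dvd_neg, ← neg_neg y, ← hk, neg_neg, Units.ext_iff, val_map_ofAdd_neg_natCast hψ,
    Units.val_one, ← orderOf_dvd_iff_pow_eq_one, orderOf_one_add_prime_pow_zmod hp hodd hf hfd,
    natCast_pow_dvd_natCast_zmod_iff ((d.sub_le f).trans hde)]

theorem conj_eq_pow_iff (hp : p.Prime) (hodd : Odd p) (hf : 0 < f) (hfd : f ≤ d) (hde : d ≤ e)
    (hψ : (ψ (ofAdd (-1)) : ZMod (p ^ d)) = 1 + (p : ZMod (p ^ d)) ^ f) (hα : IsUnit α.fst) :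
    β⁻¹ * α * β = α ^ (1 + p ^ f) ↔
      (p : ZMod (p ^ e)) ^ (e - f) ∣ α.snd ∧ (p : ZMod (p ^ e)) ^ (d - f) ∣ β.snd - 1 := by
  have : NeZero p := ⟨hp.ne_zero⟩
  have hsnd : (α * β).snd = (β * α ^ (1 + p ^ f)).snd ↔
      (p : ZMod (p ^ e)) ^ (e - f) ∣ α.snd := by
    rw [← snd_pow_pow_eq_zero_iff (hfd.trans hde), snd_mul, snd_mul, pow_add, pow_one, snd_mul,
      add_comm, add_right_inj, left_eq_add]
  rw [mul_assoc, inv_mul_eq_iff_eq_mul, ext_iff, and_comm, hsnd]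
  refine and_congr_right fun hα' => ?_
  have hact : ψ (ofAdd α.snd) = 1 :=
    (map_ofAdd_eq_one_iff hp hodd hf hfd hde hψ _).2
      ((pow_dvd_pow _ (Nat.sub_le_sub_right hde f)).trans hα')
  have hpow : (α ^ (1 + p ^ f)).fst = ψ (ofAdd (-1)) * α.fst := by
    rw [fst_pow, hact, hψ]; simp
  rw [← map_ofAdd_eq_one_iff hp hodd hf hfd hde hψ, fst_mul, fst_mul, hact, Units.val_one, one_mul,
    add_comm, add_right_inj, hpow, ← mul_assoc, eq_comm, hα.mul_eq_right, sub_eq_add_neg,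
    ofAdd_add, map_mul, Units.ext_iff, Units.val_mul, Units.val_one]

end Relation

section Counting

variable {p d e f : ℕ} {ψ : Multiplicative (ZMod (p ^ e)) →* (ZMod (p ^ d))ˣ}

theorem ncard_setOf_coordinates {R S : Type*} [Ring R] [AddGroup S] (ψ : Multiplicative S →* Rˣ)
    (A : Set R) (B C : Set S) :
    {x : UnitSemidirect ψ × UnitSemidirect ψ |
      x.1.fst ∈ A ∧ x.1.snd ∈ B ∧ x.2.snd ∈ C}.ncard =
      A.ncard * B.ncard * (Nat.card R * C.ncard) := by
  rw [← Set.ncard_univ, ← Set.ncard_prod, ← Set.ncard_prod, ← Set.ncard_prod]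
  refine Nat.card_congr ((equivProd.prodCongr equivProd).subtypeEquiv fun x => ?_)
  simp only [Set.mem_prod, Set.mem_univ, true_and, and_assoc, Set.mem_ofPred_eq]
  rfl

theorem card_isExactBicyclicPair_eq (hp : p.Prime) (hodd : Odd p)
    (hψ : ∀ y, (p : ZMod (p ^ d)) ∣ ψ y - 1) (hd : 0 < d) (hde : d < e) :
    Nat.card {x : UnitSemidirect ψ × UnitSemidirect ψ //
        IsExactBicyclicPair (p ^ d) (p ^ e) x.1 x.2} =
      (p ^ d).totient * p ^ d * (p ^ d * (p ^ e).totient) := by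
  have : NeZero p := ⟨hp.ne_zero⟩
  simp only [isExactBicyclicPair_iff hp hodd hψ hd hde]
  refine (ncard_setOf_coordinates ψ {x | IsUnit x} {y | (p : ZMod (p ^ e)) ^ (e - d) ∣ y}
    {y | IsUnit y}).trans ?_
  rw [ncard_setOf_isUnit_zmod, ncard_setOf_isUnit_zmod, Nat.card_zmod,
    ncard_setOf_natCast_pow_dvd_zmod (e.sub_le d), Nat.sub_sub_self hde.le]

theorem isExactBicyclicPair_and_conj_eq_pow_iff (hp : p.Prime) (hodd : Odd p) (hf : 0 < f)
    (hfd : f < d) (hde : d < e)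
    (hψ : (ψ (ofAdd (-1)) : ZMod (p ^ d)) = 1 + (p : ZMod (p ^ d)) ^ f)
    {α β : UnitSemidirect ψ} :
    IsExactBicyclicPair (p ^ d) (p ^ e) α β ∧ β⁻¹ * α * β = α ^ (1 + p ^ f) ↔
      IsUnit α.fst ∧ (p : ZMod (p ^ e)) ^ (e - f) ∣ α.snd ∧
        (p : ZMod (p ^ e)) ^ (d - f) ∣ β.snd - 1 := by
  have : NeZero p := ⟨hp.ne_zero⟩
  have hd := hf.trans hfd
  rw [isExactBicyclicPair_iff hp hodd (dvd_val_map_sub_one hf hψ) hd hde, and_assoc]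
  refine and_congr_right fun hα => ?_
  rw [conj_eq_pow_iff hp hodd hf hfd.le hde.le hψ hα]
  refine ⟨And.right, fun h => ⟨⟨(pow_dvd_pow _ (by lia)).trans h.1, ?_⟩, h⟩⟩
  have hpβ := (dvd_pow_self _ (Nat.sub_ne_zero_of_lt hfd)).trans h.2
  rw [isUnit_zmod_prime_pow_iff hp (hd.trans hde)]
  exact fun hβ => prime_not_dvd_one_zmod_prime_pow hp (hd.trans hde)
    (by simpa using dvd_sub hβ hpβ)

theorem card_isExactBicyclicPair_conj_eq_pow (hp : p.Prime) (hodd : Odd p) (hf : 0 < f)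
    (hfd : f < d) (hde : d < e)
    (hψ : (ψ (ofAdd (-1)) : ZMod (p ^ d)) = 1 + (p : ZMod (p ^ d)) ^ f) :
    Nat.card {x : UnitSemidirect ψ × UnitSemidirect ψ //
        IsExactBicyclicPair (p ^ d) (p ^ e) x.1 x.2 ∧ x.2⁻¹ * x.1 * x.2 = x.1 ^ (1 + p ^ f)} =
      (p ^ d).totient * p ^ f * (p ^ d * p ^ (e - (d - f))) := by
  have : NeZero p := ⟨hp.ne_zero⟩
  simp only [isExactBicyclicPair_and_conj_eq_pow_iff hp hodd hf hfd hde hψ]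
  refine (ncard_setOf_coordinates ψ {x | IsUnit x} {y | (p : ZMod (p ^ e)) ^ (e - f) ∣ y}
    {y | (p : ZMod (p ^ e)) ^ (d - f) ∣ y - 1}).trans ?_
  have hshift : {y | (p : ZMod (p ^ e)) ^ (d - f) ∣ y - 1}.ncard = p ^ (e - (d - f)) := by
    rw [← ncard_setOf_natCast_pow_dvd_zmod ((d.sub_le f).trans hde.le)]
    exact Nat.card_congr ((Equiv.subRight 1).subtypeEquiv fun _ => Iff.rfl)
  rw [hshift, ncard_setOf_isUnit_zmod, Nat.card_zmod,
    ncard_setOf_natCast_pow_dvd_zmod (e.sub_le f), Nat.sub_sub_self (hfd.trans hde).le]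

end Counting

end UnitSemidirect

namespace M2

variable {p d e f : ℕ}

theorem a_pow : M2a p d e f ^ p ^ d = 1 :=
  PresentedGroup.one_of_mem (by simp [M2rels])

theorem b_pow : M2b p d e f ^ p ^ e = 1 :=
  PresentedGroup.one_of_mem (by simp [M2rels])

theorem conj_eq : (M2b p d e f)⁻¹ * M2a p d e f * M2b p d e f = M2a p d e f ^ (1 + p ^ f) :=
  mul_inv_eq_one.1 (PresentedGroup.one_of_mem (by simp [M2rels]))

theorem exists_hom {G : Type*} [Group G] {x y : G} (hx : x ^ p ^ d = 1) (hy : y ^ p ^ e = 1)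
    (hxy : y⁻¹ * x * y = x ^ (1 + p ^ f)) :
    ∃ φ : M2 p d e f →* G, φ (M2a p d e f) = x ∧ φ (M2b p d e f) = y := by
  have h : ∀ r ∈ M2rels p d e f, FreeGroup.lift ![x, y] r = 1 := by
    rintro r (rfl | rfl | rfl)
    · simpa using hx
    · simpa using hy
    · simpa [mul_inv_eq_one] using hxy
  exact ⟨PresentedGroup.toGroup h, PresentedGroup.toGroup.of h, PresentedGroup.toGroup.of h⟩

theorem closure_pair_eq_top : Subgroup.closure {M2a p d e f, M2b p d e f} = ⊤ := by
  rw [← PresentedGroup.closure_range_of, ← Matrix.range_cons_cons_empty _ _ ![]]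
  congr 2
  ext i
  fin_cases i <;> rfl

theorem zpowers_a_normal [NeZero p] : (Subgroup.zpowers (M2a p d e f)).Normal := by
  have hfin : Finite (Subgroup.zpowers (M2a p d e f)) :=
    finite_zpowers.2
      (isOfFinOrder_iff_pow_eq_one.2 ⟨p ^ d, pow_pos (NeZero.pos p) d, a_pow⟩)
  have hb : (M2b p d e f)⁻¹ ∈ Subgroup.normalizer (Subgroup.zpowers (M2a p d e f)) := by
    refine Subgroup.mem_normalizer_fintype ?_
    rintro _ ⟨i, rfl⟩
    rw [SetLike.mem_coe, ← conj_zpow, inv_inv, conj_eq]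
    exact zpow_mem (pow_mem (Subgroup.mem_zpowers _) _) i
  rw [← Subgroup.normalizer_eq_top_iff, eq_top_iff, ← closure_pair_eq_top, Subgroup.closure_le]
  rintro _ (rfl | rfl)
  · exact Subgroup.le_normalizer (Subgroup.mem_zpowers _)
  · exact inv_mem_iff.1 hb

theorem exists_eq_zpow_mul_zpow [NeZero p] (g : M2 p d e f) :
    ∃ i j : ℤ, g = M2a p d e f ^ i * M2b p d e f ^ j := by
  have := zpowers_a_normal (p := p) (d := d) (e := e) (f := f)
  have hg : g ∈ Subgroup.zpowers (M2a p d e f) ⊔ Subgroup.zpowers (M2b p d e f) := by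
    rw [Subgroup.zpowers_eq_closure, Subgroup.zpowers_eq_closure, ← Subgroup.closure_union]
    exact closure_pair_eq_top (p := p) ▸ Subgroup.mem_top g
  obtain ⟨_, ⟨i, rfl⟩, _, ⟨j, rfl⟩, rfl⟩ := Subgroup.mem_sup_of_normal_left.1 hg
  exact ⟨i, j, rfl⟩

theorem exists_hom_zpow_mul_zpow {ψ : Multiplicative (ZMod (p ^ e)) →* (ZMod (p ^ d))ˣ}
    (hψ : (ψ (ofAdd (-1)) : ZMod (p ^ d)) = 1 + (p : ZMod (p ^ d)) ^ f) :
    ∃ φ : M2 p d e f →* UnitSemidirect ψ,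
      ∀ i j : ℤ, φ (M2a p d e f ^ i * M2b p d e f ^ j) = ⟨ofAdd (i : ZMod (p ^ d)), ofAdd j⟩ := by
  let α : UnitSemidirect ψ := SemidirectProduct.inl (ofAdd 1)
  let β : UnitSemidirect ψ := SemidirectProduct.inr (ofAdd 1)
  have hα (i : ℤ) : α ^ i = SemidirectProduct.inl (ofAdd (i : ZMod (p ^ d))) := by
    rw [← map_zpow, ← ofAdd_zsmul, zsmul_one]
  have hβ (j : ℤ) : β ^ j = SemidirectProduct.inr (ofAdd (j : ZMod (p ^ e))) := by
    rw [← map_zpow, ← ofAdd_zsmul, zsmul_one]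
  have hα1 : α ^ p ^ d = 1 := by
    rw [← zpow_natCast, hα, Int.cast_natCast, ZMod.natCast_self, ofAdd_zero, map_one]
  have hβ1 : β ^ p ^ e = 1 := by
    rw [← zpow_natCast, hβ, Int.cast_natCast, ZMod.natCast_self, ofAdd_zero, map_one]
  have hαβ : β⁻¹ * α * β = α ^ (1 + p ^ f) := by
    rw [← zpow_natCast, hα, UnitSemidirect.inr_inv_mul_inl_mul_inr, mul_one, hψ]
    push_cast
    rfl
  obtain ⟨φ, ha, hb⟩ := exists_hom hα1 hβ1 hαβ
  refine ⟨φ, fun i j => ?_⟩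
  rw [map_mul, map_zpow, map_zpow, ha, hb, hα, hβ, SemidirectProduct.mk_eq_inl_mul_inr]

theorem exists_mulEquiv [NeZero p] {ψ : Multiplicative (ZMod (p ^ e)) →* (ZMod (p ^ d))ˣ}
    (hψ : (ψ (ofAdd (-1)) : ZMod (p ^ d)) = 1 + (p : ZMod (p ^ d)) ^ f) :
    ∃ θ : M2 p d e f ≃* UnitSemidirect ψ,
      ∀ i j : ℤ, θ (M2a p d e f ^ i * M2b p d e f ^ j) = ⟨ofAdd (i : ZMod (p ^ d)), ofAdd j⟩ := by
  obtain ⟨φ, hφ⟩ := exists_hom_zpow_mul_zpow hψ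
  refine ⟨MulEquiv.ofBijective φ ⟨(injective_iff_map_eq_one φ).2 fun g hg => ?_, fun x => ?_⟩, hφ⟩
  · obtain ⟨i, j, rfl⟩ := exists_eq_zpow_mul_zpow g
    rw [hφ] at hg
    obtain ⟨hi, hj⟩ := UnitSemidirect.ext_iff.1 hg
    obtain ⟨i', rfl⟩ := (ZMod.intCast_zmod_eq_zero_iff_dvd _ _).1 hi
    obtain ⟨j', rfl⟩ := (ZMod.intCast_zmod_eq_zero_iff_dvd _ _).1 hj
    rw [zpow_mul, zpow_mul, zpow_natCast, zpow_natCast, a_pow, b_pow, one_zpow, one_zpow, mul_one]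
  · obtain ⟨i, hi⟩ := ZMod.intCast_surjective x.fst
    obtain ⟨j, hj⟩ := ZMod.intCast_surjective x.snd
    exact ⟨_, (hφ i j).trans (UnitSemidirect.ext_iff.2 ⟨hi, hj⟩)⟩

theorem card_mulAut [Finite (M2 p d e f)]
    (hab : IsExactBicyclicPair (p ^ d) (p ^ e) (M2a p d e f) (M2b p d e f)) :
    Nat.card (MulAut (M2 p d e f)) =
      Nat.card {x : M2 p d e f × M2 p d e f // IsExactBicyclicPair (p ^ d) (p ^ e) x.1 x.2 ∧
        x.2⁻¹ * x.1 * x.2 = x.1 ^ (1 + p ^ f)} := by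
  refine Nat.card_congr (Equiv.ofBijective (fun φ => ⟨(φ (M2a p d e f), φ (M2b p d e f)),
    hab.map_s18 φ, by rw [← map_inv, ← map_mul, ← map_mul, conj_eq, map_pow]⟩) ⟨?_, ?_⟩)
  · intro φ φ' h
    obtain ⟨ha, hb⟩ := Prod.ext_iff.1 (congrArg Subtype.val h)
    exact MulEquiv.toMonoidHom_injective (hab.hom_ext_s18 ha hb)
  · rintro ⟨⟨x, y⟩, hxy, hrel⟩
    obtain ⟨φ, ha, hb⟩ := exists_hom (orderOf_dvd_iff_pow_eq_one.1 hxy.1.dvd)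
      (orderOf_dvd_iff_pow_eq_one.1 hxy.2.1.dvd) hrel
    have hsurj : Function.Surjective φ := fun g => by
      obtain ⟨i, j, rfl⟩ := hxy.2.2.2 g
      exact ⟨M2a p d e f ^ i * M2b p d e f ^ j, by rw [map_mul, map_zpow, map_zpow, ha, hb]⟩
    exact ⟨MulEquiv.ofBijective φ (Finite.surjective_iff_bijective.1 hsurj),
      Subtype.ext (Prod.ext ha hb)⟩

theorem card_isExactBicyclicPair_eq (hp : p.Prime) (hodd : Odd p) (hf : 0 < f) (hfd : f < d)
    (hde : d < e) :
    Nat.card {x : M2 p d e f × M2 p d e f // IsExactBicyclicPair (p ^ d) (p ^ e) x.1 x.2} =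
      (p ^ d).totient * p ^ d * (p ^ d * (p ^ e).totient) := by
  have : NeZero p := ⟨hp.ne_zero⟩
  obtain ⟨ψ, hψ⟩ := UnitSemidirect.exists_val_map_ofAdd_neg_one_eq hp hodd hf hfd.le hde.le
  obtain ⟨θ, -⟩ := exists_mulEquiv hψ
  rw [← UnitSemidirect.card_isExactBicyclicPair_eq hp hodd
    (UnitSemidirect.dvd_val_map_sub_one hf hψ) (hf.trans hfd) hde]
  exact Nat.card_congr ((θ.toEquiv.prodCongr θ.toEquiv).subtypeEquiv fun x =>
    (isExactBicyclicPair_map_iff θ).symm)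

theorem card_mulAut_eq (hp : p.Prime) (hodd : Odd p) (hf : 0 < f) (hfd : f < d) (hde : d < e) :
    Nat.card (MulAut (M2 p d e f)) =
      (p ^ d).totient * p ^ f * (p ^ d * p ^ (e - (d - f))) := by
  have : NeZero p := ⟨hp.ne_zero⟩
  obtain ⟨ψ, hψ⟩ := UnitSemidirect.exists_val_map_ofAdd_neg_one_eq hp hodd hf hfd.le hde.le
  obtain ⟨θ, hθ⟩ := exists_mulEquiv hψ
  have : Finite (M2 p d e f) := .of_equiv _ (θ.toEquiv.trans UnitSemidirect.equivProd).symm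
  have hab : IsExactBicyclicPair (p ^ d) (p ^ e) (M2a p d e f) (M2b p d e f) := by
    have ha := hθ 1 0
    have hb := hθ 0 1
    simp only [zpow_one, zpow_zero, mul_one, one_mul, Int.cast_one, Int.cast_zero] at ha hb
    rw [← isExactBicyclicPair_map_iff θ, ha, hb]
    exact UnitSemidirect.isExactBicyclicPair_of_isUnit hp hodd
      (UnitSemidirect.dvd_val_map_sub_one hf hψ) hde isUnit_one (dvd_zero _) isUnit_one
  rw [card_mulAut hab,
    ← UnitSemidirect.card_isExactBicyclicPair_conj_eq_pow hp hodd hf hfd hde hψ]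
  refine Nat.card_congr ((θ.toEquiv.prodCongr θ.toEquiv).subtypeEquiv fun x =>
    and_congr (isExactBicyclicPair_map_iff θ).symm ?_)
  rw [← θ.injective.eq_iff, map_mul, map_mul, map_inv, map_pow]
  rfl

end M2

/-- For `G = M₂(p,d,e,f)` with `1 ≤ f < d < e`, the number of orbits of
`Aut(G)` acting componentwise on the exact `(p^d,p^e)`-bicyclic pairs of `G` equals
`p^(2d-2f-1)(p-1)`. -/
theorem stmt_18 (p d e f : ℕ) (hp : p.Prime) (hodd : Odd p)
    (hf : 0 < f) (hfd : f < d) (hde : d < e) :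
    Nat.card (Quotient (bicyclicPairSetoid (M2 p d e f) (p ^ d) (p ^ e))) =
      p ^ (2 * d - 2 * f - 1) * (p - 1) := by
  have horbits := card_isExactBicyclicPair (M2 p d e f) (p ^ d) (p ^ e)
  rw [M2.card_isExactBicyclicPair_eq hp hodd hf hfd hde, M2.card_mulAut_eq hp hodd hf hfd hde,
    Nat.totient_prime_pow hp (hf.trans (hfd.trans hde))] at horbits
  have hexp : p ^ (d + d + (e - 1)) = p ^ (2 * d - 2 * f - 1 + f + d + (e - (d - f))) := by
    congr 1
    lia
  simp only [pow_add] at hexp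
  have hpos : 0 < (p ^ d).totient * p ^ f * (p ^ d * p ^ (e - (d - f))) := by
    have := hp.pos
    have := Nat.totient_pos.2 (pow_pos this d)
    positivity
  refine Nat.eq_of_mul_eq_mul_right hpos (horbits.symm.trans ?_)
  linear_combination (p ^ d).totient * (p - 1) * hexp
end
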